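/- arXiv:1803.07501 — 10 statements merged into one kernel-verified Lean document; each statement's English description precedes it below -/
import Mathlib

section
/- Let k ≥ 3 and c ≥ 2 be integers, let r be an odd positive integer, and let p be a prime such that p > 2k(k−1)^{(r−1)/2} > 8k(k−1)²c². If d is an integer with 2d+1 = rp, then every finite connected vertex-transitive k-regular simple graph of diameter d has order strictly less than M(k,d) − c (i.e., its defect exceeds c). -/
/-- The Moore bound `M(k,d) = 1 + k + k(k-1) + ... + k(k-1)^(d-1)`. -/
def mooreBound (k d : ℕ) : ℕ := 1 + ∑ i ∈ Finset.range d, k * (k - 1) ^ i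

/-- A simple graph is vertex-transitive if for every pair of vertices `u, v` there is a
graph automorphism mapping `u` to `v`. -/
def IsVertexTransitive {V : Type*} (G : SimpleGraph V) : Prop :=
  ∀ u v : V, ∃ φ : G ≃g G, φ u = v

section Helpers
open Polynomial Matrix

noncomputable def up (q : ℤ) : ℕ → ℤ[X]
  | 0 => 0
  | 1 => 1
  | (n+2) => up q (n+1) * X - C q * up q n

lemma up_rec (q : ℤ) (n : ℕ) : up q (n+2) = up q (n+1) * X - C q * up q n := rfl

lemma up_add (q : ℤ) (m n : ℕ) :
    up q (m+n+1) = up q (m+1) * up q (n+1) - C q * up q m * up q n := by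
  induction n using Nat.twoStepInduction with
  | zero => simp [up]
  | one => simp only [up]; ring
  | more n h1 h2 =>
    have e : m + (n+2) + 1 = (m+n+1)+2 := by ring
    have e' : (m+n+1)+1 = m + (n+1)+1 := by ring
    rw [e, up_rec, e', h2, h1, up_rec q (n+1), up_rec q n]
    ring

lemma up_T (q : ℤ) (n : ℕ) :
    (up q (n+3) - up q (n+1)) * (up q (n+2) + up q (n+1)) =
    C q * ((up q (n+2) - up q n) * (up q (n+1) + up q n))
    + (up q (2*n+4) - up q (2*n+2)) + (up q (2*n+3) - up q (2*n+1)) := by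
  have h4 := up_add q (n+1) (n+2)
  have h3 := up_add q (n+1) (n+1)
  have h2 := up_add q n (n+1)
  have h1 := up_add q n n
  rw [show (n+1)+(n+2)+1 = 2*n+4 by ring] at h4
  rw [show (n+1)+(n+1)+1 = 2*n+3 by ring] at h3
  rw [show n+(n+1)+1 = 2*n+2 by ring] at h2
  rw [show n+n+1 = 2*n+1 by ring] at h1
  rw [h1, h2, h3, h4]
  have e3 := up_rec q (n+1)
  have e2 := up_rec q n
  simp only [show n+1+1 = n+2 by ring, show n+1+2=n+3 by ring] at *
  rw [e3, e2]
  ring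

lemma up_R (q : ℤ) (n : ℕ) :
    (up q (n+3) - up q (n+1)) * (up q (n+3) + up q (n+2)) =
    C q * ((up q (n+2) - up q n) * (up q (n+2) + up q (n+1)))
    + (up q (2*n+5) - up q (2*n+3)) + (up q (2*n+4) - up q (2*n+2)) := by
  have h5 := up_add q (n+2) (n+2)
  have h4 := up_add q (n+1) (n+2)
  have h3 := up_add q (n+1) (n+1)
  have h2 := up_add q n (n+1)
  rw [show (n+2)+(n+2)+1 = 2*n+5 by ring] at h5
  rw [show (n+1)+(n+2)+1 = 2*n+4 by ring] at h4
  rw [show (n+1)+(n+1)+1 = 2*n+3 by ring] at h3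
  rw [show n+(n+1)+1 = 2*n+2 by ring] at h2
  rw [h5, h2, h3, h4]
  have e3 := up_rec q (n+1)
  have e2 := up_rec q n
  simp only [show n+1+1 = n+2 by ring, show n+1+2=n+3 by ring] at *
  rw [e3, e2]
  ring

variable {V : Type*} [Fintype V] [DecidableEq V]

noncomputable def um (A : Matrix V V ℤ) (q : ℤ) (n : ℕ) : Matrix V V ℤ := aeval A (up q n)

lemma um_zero (A : Matrix V V ℤ) (q : ℤ) : um A q 0 = 0 := by simp [um, up]
lemma um_one (A : Matrix V V ℤ) (q : ℤ) : um A q 1 = 1 := by simp [um, up]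
lemma um_rec (A : Matrix V V ℤ) (q : ℤ) (n : ℕ) :
    um A q (n+2) = um A q (n+1) * A - q • um A q n := by
  simp [um, up, Algebra.smul_def]
lemma um_rec' (A : Matrix V V ℤ) (q : ℤ) (n : ℕ) :
    um A q (n+2) = A * um A q (n+1) - q • um A q n := by
  have : up q (n+2) = X * up q (n+1) - C q * up q n := by rw [up_rec]; ring
  simp [um, this, Algebra.smul_def]
lemma um_two (A : Matrix V V ℤ) (q : ℤ) : um A q 2 = A := by
  rw [um_rec, um_zero, um_one]; simp

lemma um_T (A : Matrix V V ℤ) (q : ℤ) (n : ℕ) :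
    (um A q (n+3) - um A q (n+1)) * (um A q (n+2) + um A q (n+1)) =
    q • ((um A q (n+2) - um A q n) * (um A q (n+1) + um A q n))
    + (um A q (2*n+4) - um A q (2*n+2)) + (um A q (2*n+3) - um A q (2*n+1)) := by
  have h := congrArg (aeval A) (up_T q n)
  simpa only [um, map_mul, map_add, map_sub, aeval_C, ← Algebra.smul_def] using h

lemma um_R (A : Matrix V V ℤ) (q : ℤ) (n : ℕ) :
    (um A q (n+3) - um A q (n+1)) * (um A q (n+3) + um A q (n+2)) =
    q • ((um A q (n+2) - um A q n) * (um A q (n+2) + um A q (n+1)))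
    + (um A q (2*n+5) - um A q (2*n+3)) + (um A q (2*n+4) - um A q (2*n+2)) := by
  have h := congrArg (aeval A) (up_R q n)
  simpa only [um, map_mul, map_add, map_sub, aeval_C, ← Algebra.smul_def] using h

def blk (A : Matrix V V ℤ) (q : ℤ) : Matrix (V ⊕ V) (V ⊕ V) ℤ :=
  fromBlocks A (-(q • (1 : Matrix V V ℤ))) 1 0

lemma blk_pow (A : Matrix V V ℤ) (q : ℤ) (n : ℕ) :
    blk A q ^ (n+1) = fromBlocks (um A q (n+2)) (-(q • um A q (n+1))) (um A q (n+1))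
      (-(q • um A q n)) := by
  induction n with
  | zero => simp [blk, um_zero, um_one, um_two]
  | succ n ih =>
    rw [pow_succ, ih, blk, fromBlocks_multiply]
    have e1 : um A q (n+1+2) = um A q (n+2) * A - q • um A q (n+1) := um_rec A q (n+1)
    rw [e1]
    congr 1
    · simp only [mul_one, sub_eq_add_neg]
    · simp only [mul_zero, add_zero, Matrix.mul_neg, Matrix.mul_smul, mul_one]
    · rw [um_rec A q n]; simp only [mul_one, sub_eq_add_neg]
    · simp only [mul_zero, add_zero, Matrix.mul_neg, Matrix.mul_smul, mul_one]

lemma blk_trace (A : Matrix V V ℤ) (q : ℤ) (n : ℕ) :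
    (blk A q ^ (n+1)).trace = (um A q (n+2)).trace - q * (um A q n).trace := by
  rw [blk_pow]
  simp [-zsmul_eq_mul, trace, Finset.mul_sum, sub_eq_add_neg]

lemma trace_key (A : Matrix V V ℤ) (q : ℤ) (p r : ℕ) [Fact p.Prime] :
    (((blk A q ^ (r * p)).trace : ℤ) : ZMod p) = (((blk A q ^ r).trace : ℤ) : ZMod p) ^ p := by
  have h : ∀ n, (((blk A q ^ n).trace : ℤ) : ZMod p)
      = (((blk A q).map (Int.castRingHom (ZMod p))) ^ n).trace := by
    intro n
    have := (Int.castRingHom (ZMod p)).mapMatrix.map_pow (blk A q) n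
    simp only [RingHom.mapMatrix_apply] at this
    rw [← this]
    simp [trace, Matrix.map_apply]
  rw [h, h, pow_mul, ZMod.trace_pow_card]

lemma um_inv (A : Matrix V V ℤ) (q : ℤ) (φ : V ≃ V) (hφ : ∀ x y, A (φ x) (φ y) = A x y)
    (n : ℕ) : ∀ x y, um A q n (φ x) (φ y) = um A q n x y := by
  induction n using Nat.twoStepInduction with
  | zero => simp [um_zero]
  | one => intro x y; simp [um_one, Matrix.one_apply]
  | more n h1 h2 =>
    intro x y
    rw [um_rec]
    simp only [Matrix.sub_apply, Matrix.mul_apply, Matrix.smul_apply, h1]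
    rw [← Equiv.sum_comp φ]
    simp [h2, hφ]

def nbw (A : Matrix V V ℤ) : ℕ → V → V → V → ℤ
  | 0, x, a, b => if x = a then A a b else 0
  | (n+1), x, a, b => A a b * ∑ c, if c = b then 0 else nbw A n x c a

lemma nbw_nonneg (A : Matrix V V ℤ) (hA : ∀ x y, 0 ≤ A x y) (n : ℕ) :
    ∀ x a b, 0 ≤ nbw A n x a b := by
  induction n with
  | zero => intro x a b; simp only [nbw]; split_ifs <;> simp [hA]
  | succ n ih =>
    intro x a b
    simp only [nbw]
    refine mul_nonneg (hA _ _) (Finset.sum_nonneg fun c _ => ?_)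
    split_ifs <;> simp [ih]

lemma nbw_succ (A : Matrix V V ℤ) (n : ℕ) (x a b : V) :
    nbw A (n+1) x a b = A a b * ((∑ c, nbw A n x c a) - nbw A n x b a) := by
  simp only [nbw]
  congr 1
  rw [eq_sub_iff_add_eq]
  have : nbw A n x b a = ∑ c, if c = b then nbw A n x c a else 0 := by simp
  rw [this, ← Finset.sum_add_distrib]
  refine Finset.sum_congr rfl fun c _ => ?_
  split_ifs <;> simp

lemma nbw_supp (A : Matrix V V ℤ) (hA : ∀ x y, A x y * A x y = A x y) (n : ℕ) (x a b : V) :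
    A a b * nbw A n x a b = nbw A n x a b := by
  cases n with
  | zero => simp only [nbw]; split_ifs <;> simp [hA]
  | succ n => simp only [nbw]; rw [← mul_assoc, hA]

lemma nbw_um (A : Matrix V V ℤ) (q : ℤ) (hA : ∀ x y, A x y * A x y = A x y)
    (hs : ∀ x y, A x y = A y x) (hreg : ∀ x, ∑ y, A x y = q + 1) (n : ℕ) :
    ∀ x b, ∑ a, nbw A n x a b = um A q (n+2) x b - um A q n x b := by
  have hstep : ∀ n x b, ∑ a, nbw A (n+1) x a b =
      ∑ a, (∑ c, nbw A n x c a) * A a b - ∑ a, nbw A n x b a := by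
    intro n x b
    rw [← Finset.sum_sub_distrib]
    refine Finset.sum_congr rfl fun a _ => ?_
    rw [nbw_succ, mul_sub, hs a b, nbw_supp A hA]
    ring
  induction n using Nat.twoStepInduction with
  | zero => intro x b; simp [nbw, um_zero, um_two]
  | one =>
    intro x b
    rw [hstep]
    have h3 : um A q 3 = A * A - q • (1 : Matrix V V ℤ) := by
      rw [um_rec, um_two, um_one]
    rw [show 1 + 2 = 3 from rfl, h3, um_one]
    have : ∑ a, nbw A 0 x b a = (q+1) * (1 : Matrix V V ℤ) x b := by
      simp only [nbw, Matrix.one_apply]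
      split_ifs <;> simp [hreg]
    rw [this]
    simp only [nbw, Matrix.mul_apply, Matrix.sub_apply, Matrix.smul_apply, smul_eq_mul,
      Finset.sum_ite_eq, Finset.mem_univ, if_true]
    ring
  | more n h1 h2 =>
    intro x b
    rw [hstep]
    have : ∑ a, nbw A (n+1) x b a = q * (um A q (n+2) x b - um A q n x b) := by
      have : ∀ a, nbw A (n+1) x b a =
          A b a * (um A q (n+2) x b - um A q n x b) - nbw A n x a b := by
        intro a
        rw [nbw_succ, mul_sub, h1, hs b a, nbw_supp A hA]
      simp only [this, Finset.sum_sub_distrib]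
      rw [← Finset.sum_mul, hreg, h1]; ring
    rw [this]
    simp only [h2]
    rw [um_rec A q (n+2), um_rec A q n]
    simp only [Matrix.sub_apply, Matrix.mul_apply, Matrix.smul_apply, sub_mul,
      Finset.sum_sub_distrib, smul_eq_mul]
    simp only [show n + 2 + 1 = n + 1 + 2 from rfl]
    ring

lemma exists_prev (G : SimpleGraph V) (hconn : G.Connected) (n : ℕ) (x a : V)
    (hxa : G.dist x a = n + 1) : ∃ c, G.Adj c a ∧ G.dist x c = n := by
  obtain ⟨w, hw⟩ := hconn.exists_walk_length_eq_dist a x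
  cases w with
  | nil => simp at hxa
  | @cons _ c _ h w' =>
    refine ⟨c, h.symm, ?_⟩
    have h1 : G.dist c x ≤ w'.length := G.dist_le w'
    have h2 := hconn.dist_triangle (u := x) (v := c) (w := a)
    have h3 : G.dist c a = 1 := SimpleGraph.dist_eq_one_iff_adj.2 h.symm
    rw [G.dist_comm, hxa] at hw
    rw [G.dist_comm] at h1
    simp at hw
    omega

lemma nbw_dist (G : SimpleGraph V) [DecidableRel G.Adj] (hconn : G.Connected) (n : ℕ) :
    ∀ x a b, G.Adj a b → G.dist x a = n → G.dist x b = n + 1 →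
      1 ≤ nbw (G.adjMatrix ℤ) n x a b := by
  have h0 : ∀ x y, 0 ≤ G.adjMatrix ℤ x y := by
    intro x y; simp only [SimpleGraph.adjMatrix_apply]; split_ifs <;> simp
  induction n with
  | zero =>
    intro x a b hab hxa _
    rw [hconn.dist_eq_zero_iff] at hxa
    simp [nbw, hxa, hab]
  | succ n ih =>
    intro x a b hab hxa hxb
    obtain ⟨c, hc, hxc⟩ := exists_prev G hconn n x a hxa
    have hcb : c ≠ b := by rintro rfl; omega
    have h1 := ih x c a hc hxc hxa
    simp only [nbw, SimpleGraph.adjMatrix_apply, hab, if_true, one_mul]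
    refine h1.trans ?_
    have := Finset.single_le_sum (f := fun c' => if c' = b then 0 else
      nbw (G.adjMatrix ℤ) n x c' a) (s := Finset.univ) (fun i _ => by
        split_ifs <;> simp [nbw_nonneg _ h0]) (Finset.mem_univ c)
    simpa [hcb] using this

lemma um_symm (A : Matrix V V ℤ) (q : ℤ) (hs : ∀ x y, A x y = A y x) (n : ℕ) :
    ∀ x y, um A q n x y = um A q n y x := by
  induction n using Nat.twoStepInduction with
  | zero => simp [um_zero]
  | one => intro x y; simp [um_one, Matrix.one_apply, eq_comm]
  | more n h1 h2 =>
    intro x y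
    rw [um_rec A q n]
    conv_rhs => rw [← um_rec A q n, um_rec' A q n]
    simp only [Matrix.sub_apply, Matrix.mul_apply, Matrix.smul_apply]
    rw [h1 x y]
    congr 1
    refine Finset.sum_congr rfl fun z _ => ?_
    rw [h2 x z, hs z y, mul_comm]

lemma um_row (A : Matrix V V ℤ) (q : ℤ) (hreg : ∀ x, ∑ y, A x y = q + 1) (x : V) (n : ℕ) :
    ∑ y, um A q (n+1) x y = ∑ y, um A q n x y + q ^ n := by
  induction n with
  | zero => simp [um_zero, um_one, Matrix.one_apply]
  | succ n ih =>
    rw [um_rec A q n]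
    simp only [Matrix.sub_apply, Matrix.mul_apply, Matrix.smul_apply, smul_eq_mul,
      Finset.sum_sub_distrib, ← Finset.mul_sum]
    rw [Finset.sum_comm]
    simp only [← Finset.mul_sum, hreg, ← Finset.sum_mul]
    rw [ih]; ring

lemma um_row_geom (A : Matrix V V ℤ) (q : ℤ) (hreg : ∀ x, ∑ y, A x y = q + 1) (x : V) (n : ℕ) :
    (q - 1) * ∑ y, um A q n x y = q ^ n - 1 := by
  induction n with
  | zero => simp [um_zero]
  | succ n ih => rw [um_row A q hreg, mul_add, ih]; ring

lemma um_nonneg (A : Matrix V V ℤ) (q : ℤ) (hF : ∀ n x y, um A q n x y ≤ um A q (n+2) x y)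
    (n : ℕ) : ∀ x y, 0 ≤ um A q n x y := by
  induction n using Nat.twoStepInduction with
  | zero => simp [um_zero]
  | one => intro x y; simp only [um_one, Matrix.one_apply]; split_ifs <;> simp
  | more n h1 h2 => intro x y; exact (h1 x y).trans (hF n x y)

noncomputable def tm (A : Matrix V V ℤ) (q : ℤ) (n : ℕ) (v : V) : ℤ :=
  ((um A q (n+2) - um A q n) * (um A q (n+1) + um A q n)) v v

noncomputable def rm (A : Matrix V V ℤ) (q : ℤ) (n : ℕ) (v : V) : ℤ :=
  ((um A q (n+2) - um A q n) * (um A q (n+2) + um A q (n+1))) v v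

lemma tm_succ (A : Matrix V V ℤ) (q : ℤ) (n : ℕ) (v : V) :
    tm A q (n+1) v = q * tm A q n v + (um A q (2*n+4) v v - um A q (2*n+2) v v)
      + (um A q (2*n+3) v v - um A q (2*n+1) v v) := by
  have h := congrFun (congrFun (um_T A q n) v) v
  simp only [Matrix.add_apply, Matrix.sub_apply, Matrix.smul_apply, smul_eq_mul] at h
  exact h

lemma rm_succ (A : Matrix V V ℤ) (q : ℤ) (n : ℕ) (v : V) :
    rm A q (n+1) v = q * rm A q n v + (um A q (2*n+5) v v - um A q (2*n+3) v v)
      + (um A q (2*n+4) v v - um A q (2*n+2) v v) := by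
  have h := congrFun (congrFun (um_R A q n) v) v
  simp only [Matrix.add_apply, Matrix.sub_apply, Matrix.smul_apply, smul_eq_mul] at h
  exact h

lemma tm_ge (A : Matrix V V ℤ) (q : ℤ) (hq : 1 ≤ q)
    (hF : ∀ n x y, um A q n x y ≤ um A q (n+2) x y) (v : V) (n : ℕ) :
    um A q (2*n+2) v v ≤ tm A q n v := by
  induction n with
  | zero => simp [tm, um_zero, um_one, um_two]
  | succ n ih =>
    rw [tm_succ]
    have h0 := um_nonneg A q hF (2*n+2) v v
    have h1 := hF (2*n+1) v v
    rw [show 2*(n+1)+2 = 2*n+4 by ring]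
    rw [show 2*n+1+2 = 2*n+3 by ring] at h1
    nlinarith

lemma tm_mono (A : Matrix V V ℤ) (q : ℤ) (hq : 1 ≤ q)
    (hF : ∀ n x y, um A q n x y ≤ um A q (n+2) x y) (v : V) (m j : ℕ) :
    q ^ j * tm A q m v ≤ tm A q (m+j) v := by
  induction j with
  | zero => simp
  | succ j ih =>
    rw [← add_assoc, tm_succ]
    have h1 := hF (2*(m+j)+1) v v
    have h2 := hF (2*(m+j)+2) v v
    rw [show 2*(m+j)+1+2 = 2*(m+j)+3 by ring] at h1
    rw [show 2*(m+j)+2+2 = 2*(m+j)+4 by ring] at h2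
    have := mul_le_mul_of_nonneg_left ih (by linarith : 0 ≤ q)
    rw [pow_succ']
    linarith

lemma rm_ge (A : Matrix V V ℤ) (q : ℤ) (hq : 1 ≤ q)
    (hs : ∀ x y, A x y = A y x) (hA : ∀ x y, A x y * A x y = A x y)
    (hreg : ∀ x, ∑ y, A x y = q + 1)
    (hF : ∀ n x y, um A q n x y ≤ um A q (n+2) x y) (v : V) (n : ℕ) :
    um A q (2*n+3) v v - um A q (2*n+1) v v + um A q (2*n+2) v v + (q+1) * q ^ n
      ≤ rm A q n v := by
  induction n with
  | zero =>
    have h3 : um A q 3 = A * A - q • (1 : Matrix V V ℤ) := by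
      rw [um_rec, um_two, um_one]
    simp only [rm, mul_zero, zero_add, um_zero, um_one, um_two, h3, sub_zero, Matrix.mul_add,
      Matrix.add_apply, Matrix.sub_apply, Matrix.smul_apply, Matrix.mul_one, smul_eq_mul,
      Matrix.one_apply_eq, pow_zero, mul_one]
    linarith
  | succ n ih =>
    rw [rm_succ]
    have h0 := um_nonneg A q hF (2*n+2) v v
    have h1 := hF (2*n+1) v v
    rw [show 2*(n+1)+2 = 2*n+4 by ring, show 2*(n+1)+3 = 2*n+5 by ring,
      show 2*(n+1)+1 = 2*n+3 by ring]
    rw [show 2*n+1+2 = 2*n+3 by ring] at h1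
    have := mul_le_mul_of_nonneg_left ih (by linarith : 0 ≤ q)
    rw [pow_succ]
    nlinarith

lemma sum_sq_le (E : V → ℤ) (hE : ∀ w, 0 ≤ E w) (D : ℤ) (hD : ∑ w, E w = D) :
    (∀ w, E w ≤ D) ∧ ∑ w, E w * E w ≤ D ^ 2 := by
  have h1 : ∀ w, E w ≤ D := fun w => hD ▸
    Finset.single_le_sum (f := E) (fun i _ => hE i) (Finset.mem_univ w)
  refine ⟨h1, ?_⟩
  calc ∑ w, E w * E w ≤ ∑ w, D * E w :=
        Finset.sum_le_sum fun w _ => mul_le_mul_of_nonneg_right (h1 w) (hE w)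
    _ = D ^ 2 := by rw [← Finset.mul_sum, hD]; ring

lemma core (A : Matrix V V ℤ) (q : ℤ) (hq : 2 ≤ q) (h01 : ∀ x y, 0 ≤ A x y ∧ A x y ≤ 1)
    (hs : ∀ x y, A x y = A y x) (hA : ∀ x y, A x y * A x y = A x y)
    (hreg : ∀ x, ∑ y, A x y = q + 1)
    (hF : ∀ n x y, um A q n x y ≤ um A q (n+2) x y) (v : V) (e : ℕ) (D : ℤ)
    (hS : ∀ w, 1 ≤ um A q (e+2) v w + um A q (e+1) v w)
    (hD : ∑ w, (um A q (e+2) v w + um A q (e+1) v w - 1) = D) :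
    tm A q e v ≤ D ^ 2 ∧
    (q+1) * q^(e+1) - q * D^2 - (q-1) * (D + D^2) ≤ um A q (2*e+4) v v - q * um A q (2*e+2) v v ∧
    um A q (2*e+4) v v - q * um A q (2*e+2) v v ≤ (q+1)*q^(e+1) + D * (D + q + q * D) := by
  have h0 := um_nonneg A q hF
  have hsym := um_symm A q hs
  set E : V → ℤ := fun w => um A q (e+2) v w + um A q (e+1) v w - 1 with hEdef
  have hE : ∀ w, 0 ≤ E w := fun w => by have := hS w; simp only [hEdef]; linarith
  obtain ⟨hED, hE2⟩ := sum_sq_le E hE D hD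
  have hD0 : 0 ≤ D := hD ▸ Finset.sum_nonneg fun w _ => hE w
  have hT : tm A q e v ≤ D ^ 2 := by
    refine le_trans ?_ hE2
    simp only [tm, Matrix.mul_apply, Matrix.sub_apply, Matrix.add_apply]
    refine Finset.sum_le_sum fun w _ => ?_
    rw [hsym (e+1) w v, hsym e w v]
    have a0 := hF e v w
    have a1 := h0 e v w
    have a2 := h0 (e+1) v w
    have a3 := hE w
    obtain ⟨a, ha⟩ : ∃ a, a = um A q (e+2) v w - um A q e v w := ⟨_, rfl⟩
    obtain ⟨b, hb⟩ : ∃ b, b = um A q (e+1) v w + um A q e v w := ⟨_, rfl⟩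
    have hab : E w = a + b - 1 := by simp only [hEdef]; linarith
    rw [← ha, ← hb]
    have ha0 : 0 ≤ a := by linarith
    have hb0 : 0 ≤ b := by linarith
    rw [hab] at a3 ⊢
    rcases eq_or_lt_of_le ha0 with h | h
    · rw [← h]; nlinarith
    · rcases eq_or_lt_of_le hb0 with h' | h'
      · rw [← h']; nlinarith
      · have : a ≤ a + b - 1 := by linarith
        have : b ≤ a + b - 1 := by linarith
        exact mul_le_mul ‹_› ‹_› hb0 a3
  have hfrow : ∀ n, ∑ w, (um A q (n+2) v w - um A q n v w) = (q+1) * q^n := by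
    intro n
    rw [Finset.sum_sub_distrib, um_row A q hreg v (n+1), um_row A q hreg v n]
    ring
  have hfS : ∀ w, um A q (e+2) v w - um A q e v w ≤ 1 + E w := by
    intro w
    have a1 := h0 e v w
    have a2 := h0 (e+1) v w
    simp only [hEdef]; linarith
  have hR : rm A q e v ≤ (q+1) * q^e + (D + D^2) := by
    have : rm A q e v = ∑ w, (um A q (e+2) v w - um A q e v w)
        + ∑ w, (um A q (e+2) v w - um A q e v w) * E w := by
      simp only [rm, Matrix.mul_apply, Matrix.sub_apply, Matrix.add_apply]
      rw [← Finset.sum_add_distrib]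
      refine Finset.sum_congr rfl fun w _ => ?_
      rw [hsym (e+1) w v, hsym (e+2) w v]
      simp only [hEdef]; ring
    rw [this, hfrow]
    have h2 : ∑ w, (um A q (e+2) v w - um A q e v w) * E w ≤ ∑ w, (E w + E w * E w) := by
      refine Finset.sum_le_sum fun w _ => ?_
      have := mul_le_mul_of_nonneg_right (hfS w) (hE w)
      linarith
    rw [Finset.sum_add_distrib, hD] at h2
    linarith
  have hT1 : tm A q (e+1) v = (q+1) * q^(e+1) +
      ∑ w, (um A q (e+3) v w - um A q (e+1) v w) * E w := by
    rw [← hfrow (e+1)]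
    simp only [tm, Matrix.mul_apply, Matrix.sub_apply, Matrix.add_apply]
    rw [← Finset.sum_add_distrib]
    refine Finset.sum_congr rfl fun w _ => ?_
    rw [hsym (e+1) w v, hsym (e+1+1) w v]
    simp only [hEdef]; ring
  have hg0 : 0 ≤ ∑ w, (um A q (e+3) v w - um A q (e+1) v w) * E w :=
    Finset.sum_nonneg fun w _ => mul_nonneg (sub_nonneg.2 (hF (e+1) v w)) (hE w)
  have hg : ∀ w, um A q (e+3) v w - um A q (e+1) v w ≤ D + q * (1 + D) := by
    intro w
    have hEA : ∑ z, E z * A z w ≤ D := by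
      rw [← hD]
      refine Finset.sum_le_sum fun z _ => ?_
      have := mul_le_mul_of_nonneg_left (h01 z w).2 (hE z)
      linarith
    have hAw : ∑ z, A z w = q + 1 := by
      rw [← hreg w]; exact Finset.sum_congr rfl fun z _ => hs z w
    have e1 : ∑ z, E z * A z w =
        ∑ z, um A q (e+2) v z * A z w + ∑ z, um A q (e+1) v z * A z w - (q+1) := by
      rw [← hAw, ← Finset.sum_add_distrib, ← Finset.sum_sub_distrib]
      refine Finset.sum_congr rfl fun z _ => ?_
      simp only [hEdef]; ring
    have r3 := congrFun (congrFun (um_rec A q (e+1)) v) w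
    have r2 := congrFun (congrFun (um_rec A q e) v) w
    simp only [Matrix.sub_apply, Matrix.mul_apply, Matrix.smul_apply, smul_eq_mul] at r3 r2
    simp only [show e+1+1 = e+2 from rfl, show e+1+2 = e+3 from rfl] at r3
    have hf := hfS w
    have hEw := hED w
    have hE0 := hE w
    have hEe : E w = um A q (e+2) v w + um A q (e+1) v w - 1 := rfl
    have key : um A q (e+3) v w - um A q (e+1) v w =
      ∑ z, E z * A z w - (q+1) * E w + q * (um A q (e+2) v w - um A q e v w) := by
      rw [e1, hEe, r3]
      linarith
    rw [key]
    nlinarith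
  have hg1 : ∑ w, (um A q (e+3) v w - um A q (e+1) v w) * E w ≤ D * (D + q + q * D) := by
    calc _ ≤ ∑ w, (D + q * (1 + D)) * E w :=
          Finset.sum_le_sum fun w _ => mul_le_mul_of_nonneg_right (hg w) (hE w)
      _ = _ := by rw [← Finset.mul_sum, hD]; ring
  have hTs := tm_succ A q e v
  have hTge := tm_ge A q (by linarith) hF v e
  have hRge := rm_ge A q (by linarith) hs hA hreg hF v e
  have hF2 := hF (2*e+1) v v
  rw [show 2*e+1+2 = 2*e+3 by ring] at hF2
  have hU0 := h0 (2*e+2) v v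
  refine ⟨hT, ?_, ?_⟩
  · nlinarith
  · nlinarith

lemma diag_zero (A : Matrix V V ℤ) (q : ℤ) (hq : 1 ≤ q)
    (hF : ∀ n x y, um A q n x y ≤ um A q (n+2) x y) (v : V) (e m : ℕ) (hm : 2 * m ≤ e)
    (hT : tm A q e v < q ^ m) :
    um A q (2*m+2) v v - q * um A q (2*m) v v = 0 := by
  have h0 := um_nonneg A q hF
  have h1 := tm_mono A q hq hF v m (e-m)
  rw [show m + (e-m) = e by omega] at h1
  have h2 : q ^ m ≤ q ^ (e-m) := pow_le_pow_right₀ hq (by omega)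
  have h3 := tm_ge A q hq hF v m
  have h4 := hF (2*m) v v
  have h5 := h0 (2*m) v v
  have h6 : tm A q m v < 1 := by
    by_contra h
    push Not at h
    have : 0 < q^(e-m) := by positivity
    nlinarith
  have h7 : um A q (2*m+2) v v = 0 := by linarith
  have h8 : um A q (2*m) v v = 0 := by linarith
  rw [h7, h8]; ring

lemma final_arith (kqm x : ℤ) (p : ℕ) (sg : ℤ) (hsg : sg = 1 ∨ sg = -1)
    (hp : 2 * kqm < p) (hx : |x| < kqm) (hdvd : (p : ℤ) ∣ sg * kqm + x) : False := by
  rw [abs_lt] at hx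
  have h := Int.eq_zero_of_abs_lt_dvd hdvd (by rw [abs_lt]; rcases hsg with h | h <;> subst h <;>
    constructor <;> linarith [hx.1, hx.2])
  rcases hsg with h' | h' <;> subst h' <;> linarith [hx.1, hx.2]

lemma S_pos (G : SimpleGraph V) [DecidableRel G.Adj] (hconn : G.Connected) (q : ℤ)
    (hA : ∀ x y, G.adjMatrix ℤ x y * G.adjMatrix ℤ x y = G.adjMatrix ℤ x y)
    (hs : ∀ x y, G.adjMatrix ℤ x y = G.adjMatrix ℤ y x)
    (h0 : ∀ x y, 0 ≤ G.adjMatrix ℤ x y)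
    (hreg : ∀ x, ∑ y, G.adjMatrix ℤ x y = q + 1)
    (hF : ∀ n x y, um (G.adjMatrix ℤ) q n x y ≤ um (G.adjMatrix ℤ) q (n+2) x y) (x y : V) (n : ℕ) :
    G.dist x y ≤ n → 1 ≤ um (G.adjMatrix ℤ) q (n+1) x y + um (G.adjMatrix ℤ) q n x y := by
  induction n with
  | zero =>
    intro h
    have : x = y := hconn.dist_eq_zero_iff.1 (by omega)
    subst this
    simp [um_zero, um_one]
  | succ n ih =>
    intro h
    have hf := hF n x y
    rcases Nat.lt_or_ge n (G.dist x y) with h' | h'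
    · have hd : G.dist x y = n + 1 := by omega
      obtain ⟨a, ha, hxa⟩ := exists_prev G hconn n x y hd
      have h1 := nbw_dist G hconn n x a y ha hxa hd
      have h2 := nbw_um (G.adjMatrix ℤ) q hA hs hreg n x y
      have h3 := Finset.single_le_sum (f := fun a => nbw (G.adjMatrix ℤ) n x a y)
        (s := Finset.univ) (fun i _ => nbw_nonneg _ h0 n x i y) (Finset.mem_univ a)
      have h4 := um_nonneg (G.adjMatrix ℤ) q hF n x y
      have h5 := um_nonneg (G.adjMatrix ℤ) q hF (n+1) x y
      rw [h2] at h3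
      rw [show n+1+1 = n+2 from rfl]
      linarith
    · have := ih h'
      rw [show n+1+1 = n+2 from rfl]
      linarith

lemma moore_geom (k d : ℕ) (hk : 1 ≤ k) :
    ((k : ℤ) - 2) * (mooreBound k d : ℤ) = (k : ℤ) * ((k : ℤ) - 1) ^ d - 2 := by
  induction d with
  | zero => simp [mooreBound]
  | succ d ih =>
    have : (mooreBound k (d+1) : ℤ) = mooreBound k d + k * ((k:ℤ)-1)^d := by
      simp only [mooreBound, Finset.sum_range_succ]
      push_cast [Nat.cast_sub hk]
      ring
    rw [this, mul_add, ih]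
    ring

lemma euler_step (q : ℤ) (p m d : ℕ) (hp : p.Prime) (hq : ¬ (p : ℤ) ∣ q)
    (hd : 2 * d + 1 = (2 * m + 1) * p) :
    ∃ sg : ℤ, (sg = 1 ∨ sg = -1) ∧ (p : ℤ) ∣ q ^ d - sg * q ^ m := by
  haveI := Fact.mk hp
  have hodd : p % 2 = 1 := by
    rcases Nat.even_or_odd p with ⟨t, ht⟩ | ⟨t, ht⟩
    · exfalso
      rw [ht, ← two_mul, ← mul_assoc, mul_comm _ 2, mul_assoc] at hd
      omega
    · omega
  have hd' : d = p / 2 * (2 * m + 1) + m := by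
    obtain ⟨t, ht⟩ : ∃ t, p = 2 * t + 1 := ⟨p/2, by omega⟩
    have ht2 : p / 2 = t := by omega
    rw [ht2]
    rw [ht] at hd
    nlinarith
  have hne : (q : ZMod p) ≠ 0 := by
    rwa [Ne, ZMod.intCast_zmod_eq_zero_iff_dvd]
  have hcast : ∀ sg : ℤ, ((q : ZMod p) ^ (p/2)) ^ (2*m+1) = (sg : ZMod p) →
      (p : ℤ) ∣ q ^ d - sg * q ^ m := by
    intro sg h
    rw [← ZMod.intCast_zmod_eq_zero_iff_dvd]
    push_cast
    rw [← h, hd', pow_add, pow_mul]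
    ring
  rcases ZMod.pow_div_two_eq_neg_one_or_one p hne with h | h
  · exact ⟨1, Or.inl rfl, hcast 1 (by rw [h]; simp)⟩
  · exact ⟨-1, Or.inr rfl, hcast (-1) (by rw [h, Odd.neg_one_pow ⟨m, rfl⟩]; simp)⟩

end Helpers

set_option maxHeartbeats 1000000

/-- Let `k ≥ 3`, `c ≥ 2`, `r` an odd positive integer, `p` a prime with
`p > 2k(k−1)^((r−1)/2) > 8k(k−1)²c²`.  If `2d+1 = rp` then every finite connected
vertex-transitive `k`-regular graph of diameter `d` has order less than `M(k,d) − c`. -/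
theorem stmt_1 (k c r p d : ℕ) (hk : 3 ≤ k) (hc : 2 ≤ c)
    (hr : Odd r) (hrpos : 0 < r) (hp : p.Prime)
    (h1 : 2 * k * (k - 1) ^ ((r - 1) / 2) < p)
    (h2 : 8 * k * (k - 1) ^ 2 * c ^ 2 < 2 * k * (k - 1) ^ ((r - 1) / 2))
    (hd : 2 * d + 1 = r * p)
    (V : Type*) [Fintype V] (G : SimpleGraph V) [DecidableRel G.Adj]
    (hconn : G.Connected) (htrans : IsVertexTransitive G)
    (hreg : G.IsRegularOfDegree k) (hdiam : G.diam = d) :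
    (Fintype.card V : ℤ) < (mooreBound k d : ℤ) - c := by
  classical
  by_contra hcon
  push Not at hcon
  haveI := Fact.mk hp
  obtain ⟨m, rfl⟩ := hr
  rw [show (2 * m + 1 - 1) / 2 = m by omega] at h1 h2
  -- integer versions of the hypotheses
  obtain ⟨q, hqdef⟩ : ∃ q : ℤ, q = (k : ℤ) - 1 := ⟨_, rfl⟩
  have hkq : (k : ℤ) = q + 1 := by rw [hqdef]; ring
  have hq2 : 2 ≤ q := by rw [hqdef]; have : (3:ℤ) ≤ k := by exact_mod_cast hk
                         linarith
  have hkcast : ((k - 1 : ℕ) : ℤ) = q := by rw [Nat.cast_sub (by omega), hqdef]; simp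
  have h1' : 2 * ((q+1) * q ^ m) < (p : ℤ) := by
    have : ((2 * k * (k - 1) ^ m : ℕ) : ℤ) < p := by exact_mod_cast h1
    rw [Nat.cast_mul, Nat.cast_pow, hkcast] at this
    push_cast at this
    rw [hkq] at this
    linarith
  have h2' : 4 * q ^ 2 * (c : ℤ) ^ 2 < q ^ m := by
    have h2n : ((8 * k * (k - 1) ^ 2 * c ^ 2 : ℕ) : ℤ) < ((2 * k * (k - 1) ^ m : ℕ) : ℤ) := by
      exact_mod_cast h2
    rw [Nat.cast_mul, Nat.cast_mul, Nat.cast_pow, Nat.cast_mul (2 * k), Nat.cast_pow (k - 1) m,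
      hkcast] at h2n
    push_cast at h2n
    rw [hkq] at h2n
    have : (2 * (q+1)) * (4 * q ^ 2 * (c : ℤ) ^ 2) < (2 * (q+1)) * q ^ m := by linarith
    exact lt_of_mul_lt_mul_left this (by linarith)
  have hc2 : (2 : ℤ) ≤ c := by exact_mod_cast hc
  have hp3 : 3 ≤ p := by
    have : (3 : ℤ) ≤ p := by nlinarith [pow_pos (by linarith : 0 < q) m]
    exact_mod_cast this
  have hdm : 3 * (2 * m + 1) ≤ 2 * d + 1 := by rw [hd]; nlinarith
  obtain ⟨e, rfl⟩ : ∃ e, d = e + 1 := ⟨d - 1, by omega⟩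
  have hm0 : 1 ≤ m := by
    by_contra h
    have : m = 0 := by omega
    subst this
    have hx : 0 < q ^ 2 * (c : ℤ) ^ 2 :=
      mul_pos (pow_pos (by linarith) 2) (pow_pos (by linarith) 2)
    rw [pow_zero] at h2'
    linarith
  -- adjacency matrix facts
  have hA : ∀ x y, G.adjMatrix ℤ x y * G.adjMatrix ℤ x y = G.adjMatrix ℤ x y := by
    intro x y; simp only [SimpleGraph.adjMatrix_apply]; split_ifs <;> simp
  have hs : ∀ x y, G.adjMatrix ℤ x y = G.adjMatrix ℤ y x := by
    intro x y; simp only [SimpleGraph.adjMatrix_apply, G.adj_comm]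
  have h01 : ∀ x y, 0 ≤ G.adjMatrix ℤ x y ∧ G.adjMatrix ℤ x y ≤ 1 := by
    intro x y; simp only [SimpleGraph.adjMatrix_apply]; split_ifs <;> simp
  have hrow : ∀ x, ∑ y, G.adjMatrix ℤ x y = q + 1 := by
    intro x
    rw [← hkq, ← hreg x, ← SimpleGraph.card_neighborFinset_eq_degree]
    simp [SimpleGraph.adjMatrix_apply, ← SimpleGraph.mem_neighborFinset]
  have hF : ∀ n x y, um (G.adjMatrix ℤ) q n x y ≤ um (G.adjMatrix ℤ) q (n+2) x y := by
    intro n x y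
    have h := nbw_um (G.adjMatrix ℤ) q hA hs hrow n x y
    have h' : 0 ≤ ∑ a, nbw (G.adjMatrix ℤ) n x a y :=
      Finset.sum_nonneg fun a _ => nbw_nonneg _ (fun x y => (h01 x y).1) n x a y
    linarith
  obtain ⟨v⟩ := hconn.nonempty
  have hS : ∀ w, 1 ≤ um (G.adjMatrix ℤ) q (e+2) v w + um (G.adjMatrix ℤ) q (e+1) v w := by
    intro w
    refine S_pos G hconn q hA hs (fun x y => (h01 x y).1) hrow hF v w (e+1) ?_
    rw [← hdiam]
    exact SimpleGraph.dist_le_diam (SimpleGraph.ediam_ne_top_of_diam_ne_zero (by omega))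
  -- the defect
  have hMrow : ∑ w, (um (G.adjMatrix ℤ) q (e+2) v w + um (G.adjMatrix ℤ) q (e+1) v w)
      = (mooreBound k (e+1) : ℤ) := by
    have hg2 := um_row_geom (G.adjMatrix ℤ) q hrow v (e+2)
    have hg1 := um_row_geom (G.adjMatrix ℤ) q hrow v (e+1)
    have hM := moore_geom k (e+1) (by omega)
    rw [hkq] at hM
    rw [Finset.sum_add_distrib]
    refine mul_left_cancel₀ (show q - 1 ≠ 0 by intro h; linarith) ?_
    rw [mul_add, hg2, hg1]
    rw [show q + 1 - 2 = q - 1 by ring, show q + 1 - 1 = q by ring] at hM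
    rw [hM]; ring
  obtain ⟨D, hDdef⟩ : ∃ D : ℤ, D = (mooreBound k (e+1) : ℤ) - Fintype.card V := ⟨_, rfl⟩
  have hD : ∑ w, (um (G.adjMatrix ℤ) q (e+2) v w + um (G.adjMatrix ℤ) q (e+1) v w - 1) = D := by
    rw [Finset.sum_sub_distrib, hMrow, hDdef]; simp
  have hDc : D ≤ c := by linarith
  have hD0 : 0 ≤ D := hD ▸ Finset.sum_nonneg fun w _ => by linarith [hS w]
  obtain ⟨hT, hlo, hhi⟩ := core (G.adjMatrix ℤ) q hq2 h01 hs hA hrow hF v e D hS hD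
  have hD2 : D ^ 2 ≤ (c : ℤ) ^ 2 := by nlinarith
  have hqm : (c : ℤ) ^ 2 < q ^ m := by
    have hq1 : 1 ≤ q ^ 2 := by nlinarith
    have := mul_le_mul_of_nonneg_right hq1 (sq_nonneg (c : ℤ))
    nlinarith [sq_nonneg (c : ℤ)]
  have hz := diag_zero (G.adjMatrix ℤ) q (by linarith) hF v e m (by omega) (by linarith)
  -- diagonals are constant
  have hdiag : ∀ n x, um (G.adjMatrix ℤ) q n x x = um (G.adjMatrix ℤ) q n v v := by
    intro n x
    obtain ⟨φ, hφ⟩ := htrans v x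
    rw [← hφ]
    exact um_inv (G.adjMatrix ℤ) q φ.toEquiv
      (fun x y => by
        change G.adjMatrix ℤ (φ x) (φ y) = _
        simp only [SimpleGraph.adjMatrix_apply, φ.map_adj_iff]) n v v
  have htr : ∀ n, (um (G.adjMatrix ℤ) q n).trace
      = (Fintype.card V : ℤ) * um (G.adjMatrix ℤ) q n v v := by
    intro n
    simp [Matrix.trace, hdiag n]
  have hkey := trace_key (G.adjMatrix ℤ) q p (2*m+1)
  rw [← hd, show 2 * (e+1) + 1 = (2*e+2)+1 by ring, blk_trace, blk_trace, htr, htr, htr, htr,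
    show (Fintype.card V : ℤ) * um (G.adjMatrix ℤ) q (2*m+2) v v -
      q * ((Fintype.card V : ℤ) * um (G.adjMatrix ℤ) q (2*m) v v) =
      (Fintype.card V : ℤ) * (um (G.adjMatrix ℤ) q (2*m+2) v v -
      q * um (G.adjMatrix ℤ) q (2*m) v v) by ring, hz, mul_zero, Int.cast_zero,
    zero_pow hp.ne_zero, ZMod.intCast_zmod_eq_zero_iff_dvd] at hkey
  obtain ⟨W, hW⟩ : ∃ W, W = um (G.adjMatrix ℤ) q (2*e+4) v v
    - q * um (G.adjMatrix ℤ) q (2*e+2) v v := ⟨_, rfl⟩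
  rw [← hW] at hlo hhi
  have hdvd : (p : ℤ) ∣ (Fintype.card V : ℤ) * W := by
    rw [hW]
    rw [show 2*e+2+2 = 2*e+4 from rfl] at hkey
    rw [mul_sub, mul_left_comm]
    exact hkey
  -- Euler's criterion
  have hqm1 : q ≤ q ^ m := le_self_pow₀ (by linarith) (by omega)
  have hqnd : ¬ (p : ℤ) ∣ q := fun h => by
    have := Int.le_of_dvd (by linarith) h
    nlinarith
  obtain ⟨sg, hsg, hsd⟩ := euler_step q p m (e+1) hp hqnd hd
  have hcc : (c : ℤ) ≤ (c : ℤ) ^ 2 := by nlinarith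
  have hqq : q ≤ q ^ 2 := by nlinarith
  have hc20 : (0 : ℤ) ≤ (c : ℤ) ^ 2 := sq_nonneg _
  have hbig : (q + 1) * (4 * q ^ 2 * (c : ℤ) ^ 2) < (q + 1) * q ^ m :=
    mul_lt_mul_of_pos_left h2' (by linarith)
  have hqc : q * (c : ℤ) ^ 2 ≤ q ^ 2 * (c : ℤ) ^ 2 := mul_le_mul_of_nonneg_right hqq hc20
  have hqc3 : q ^ 2 * (c : ℤ) ^ 2 * 2 ≤ q ^ 2 * (c : ℤ) ^ 2 * q :=
    mul_le_mul_of_nonneg_left hq2 (by positivity)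
  have hqc1 : 2 * (c : ℤ) ^ 2 ≤ q * (c : ℤ) ^ 2 := mul_le_mul_of_nonneg_right hq2 hc20
  have hqD : q * D ≤ q * (c : ℤ) ^ 2 := mul_le_mul_of_nonneg_left (by linarith) (by linarith)
  have hqD2 : q * D ^ 2 ≤ q * (c : ℤ) ^ 2 := mul_le_mul_of_nonneg_left hD2 (by linarith)
  have hqD0 : 0 ≤ q * D := mul_nonneg (by linarith) hD0
  have hqD20 : 0 ≤ q * D ^ 2 := mul_nonneg (by linarith) (sq_nonneg D)
  have hpI : Prime (p : ℤ) := Nat.prime_iff_prime_int.1 hp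
  rcases hpI.dvd_or_dvd hdvd with h | h
  · have hM := moore_geom k (e+1) (by omega)
    rw [hkq] at hM
    rw [show q + 1 - 2 = q - 1 by ring, show q + 1 - 1 = q by ring] at hM
    refine final_arith ((q+1) * q ^ m) (-2 - (q-1) * D) p sg hsg h1' ?_ ?_
    · rw [abs_lt]; constructor <;> nlinarith
    · have e1 : sg * ((q+1) * q ^ m) + (-2 - (q-1) * D) =
        (q - 1) * (Fintype.card V : ℤ) - (q+1) * (q ^ (e+1) - sg * q ^ m) := by
        have : (Fintype.card V : ℤ) = mooreBound k (e+1) - D := by rw [hDdef]; ring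
        rw [this, mul_sub, hM]; ring
      rw [e1]
      exact dvd_sub (Dvd.dvd.mul_left h _) (Dvd.dvd.mul_left hsd _)
  · refine final_arith ((q+1) * q ^ m) (W - (q+1) * q ^ (e+1)) p sg hsg h1' ?_ ?_
    · rw [abs_lt]; constructor <;> nlinarith
    · have e1 : sg * ((q+1) * q ^ m) + (W - (q+1) * q ^ (e+1)) =
        W - (q+1) * (q ^ (e+1) - sg * q ^ m) := by ring
      rw [e1]
      exact dvd_sub h (Dvd.dvd.mul_left hsd _)
end

section
/- (Alon–Boppana) Let k ≥ 3 be an integer. For every real ε > 0 there exists N such that every finite connected k-regular simple graph on n > N vertices has a real eigenvalue λ of its adjacency matrix with λ ≠ k and |λ| ≥ 2√(k−1) − ε. Equivalently, the liminf over n of the second largest absolute value of an adjacency eigenvalue of k-regular graphs on n vertices is at least 2√(k−1). -/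
open Finset Matrix

lemma ab_spectral {V : Type} [Fintype V] [DecidableEq V] (M : Matrix V V ℝ) (hM : M.IsHermitian)
    (f : V → ℝ) (hf : f ≠ 0) (c : ℝ) (h : c * (f ⬝ᵥ f) ≤ f ⬝ᵥ (M *ᵥ f)) :
    ∃ μ : ℝ, c ≤ μ ∧ ∃ w : V → ℝ, w ≠ 0 ∧ M *ᵥ w = μ • w := by
  have hH : (c • (1 : Matrix V V ℝ) - M).IsHermitian := by
    refine Matrix.IsHermitian.sub ?_ hM
    simp [Matrix.IsHermitian, Matrix.conjTranspose_smul]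
  have hnp : ¬ ∀ i, 0 < hH.eigenvalues i := by
    intro hp
    have := (hH.posDef_iff_eigenvalues_pos.mpr hp).dotProduct_mulVec_pos hf
    rw [Matrix.sub_mulVec, Matrix.smul_mulVec, Matrix.one_mulVec, dotProduct_sub,
      dotProduct_smul] at this
    simp only [star_trivial, smul_eq_mul] at this
    linarith
  push Not at hnp
  obtain ⟨i, hi⟩ := hnp
  refine ⟨c - hH.eigenvalues i, by linarith, ⇑(hH.eigenvectorBasis i), ?_, ?_⟩
  · intro h0
    apply hH.eigenvectorBasis.orthonormal.ne_zero i
    ext j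
    exact congrFun h0 j
  · have := hH.mulVec_eigenvectorBasis i
    rw [Matrix.sub_mulVec, Matrix.smul_mulVec, Matrix.one_mulVec] at this
    rw [sub_smul, ← this]
    simp

lemma ab_height {V : Type} [Fintype V] [DecidableEq V] (G : SimpleGraph V) [DecidableRel G.Adj]
    (hc : G.Connected) (k : ℕ) (hr : G.IsRegularOfDegree k) :
    ∃ h : V → ℕ, (∀ x y, G.Adj x y → h y ≤ h x + 1) ∧
      (∀ x, #{y | G.Adj x y ∧ h x < h y} ≤ k - 1) ∧
      (∀ y i, h y = i + 1 → ∃ x, G.Adj x y ∧ h x = i) ∧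
      #{y | h y = 0} ≤ k + 1 ∧ ∃ v, h v = 0 := by
  obtain ⟨v⟩ := hc.nonempty
  have hadj : ∀ x y, G.Adj x y → G.dist y v ≤ G.dist x v + 1 := by
    intro x y hxy
    have := hc.dist_triangle (u := y) (v := x) (w := v)
    have h1 := SimpleGraph.dist_eq_one_iff_adj.mpr hxy.symm
    omega
  have hpred : ∀ x, x ≠ v → ∃ y, G.Adj x y ∧ G.dist y v + 1 = G.dist x v := by
    intro x hx
    obtain ⟨p, hp⟩ := hc.exists_walk_length_eq_dist x v
    cases p with
    | nil => exact absurd rfl hx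
    | cons hxy p =>
      rename_i y
      refine ⟨y, hxy, ?_⟩
      have h1 := SimpleGraph.dist_le p
      have h2 := hadj y x hxy.symm
      simp at hp
      omega
  have hdeg : ∀ x, #{y | G.Adj x y} = k := by
    intro x
    rw [← hr x, ← SimpleGraph.card_neighborFinset_eq_degree]
    congr 1
    ext y; simp
  refine ⟨fun x => G.dist x v - 1, ?_, ?_, ?_, ?_, v, by simp⟩
  · intro x y hxy
    have := hadj x y hxy
    simp only
    omega
  · intro x
    by_cases hx : x = v
    · subst hx
      have : ({y | G.Adj x y ∧ G.dist x x - 1 < G.dist y x - 1} : Finset V) = ∅ := by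
        ext y
        simp only [mem_filter, mem_univ, true_and, notMem_empty, iff_false]
        rintro ⟨ha, hb⟩
        have := hadj x y ha
        simp at hb this
        omega
      rw [this]; simp
    · obtain ⟨y, hy, hd⟩ := hpred x hx
      have : ({z | G.Adj x z ∧ G.dist x v - 1 < G.dist z v - 1} : Finset V)
          ⊆ ({z | G.Adj x z} : Finset V).erase y := by
        intro z
        simp only [mem_filter, mem_univ, true_and, mem_erase]
        rintro ⟨ha, hb⟩
        refine ⟨?_, ha⟩
        rintro rfl
        omega
      refine (card_le_card this).trans ?_
      rw [card_erase_of_mem (by simpa using hy), hdeg]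
  · intro y i hi
    have hy : y ≠ v := by
      rintro rfl
      simp at hi
    obtain ⟨x, hx, hd⟩ := hpred y hy
    refine ⟨x, hx.symm, ?_⟩
    simp only at hi ⊢
    omega
  · have : ({y | G.dist y v - 1 = 0} : Finset V) ⊆ insert v ({y | G.Adj v y} : Finset V) := by
      intro y
      simp only [mem_filter, mem_univ, true_and, mem_insert]
      intro hy
      by_cases h : y = v
      · exact Or.inl h
      · right
        have := hc.pos_dist_of_ne h
        exact (SimpleGraph.dist_eq_one_iff_adj.mp (by omega)).symm
    refine (card_le_card this).trans ((card_insert_le _ _).trans ?_)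
    rw [hdeg]

lemma ab_level {V : Type} [Fintype V] [DecidableEq V] (G : SimpleGraph V) [DecidableRel G.Adj]
    (q : ℕ) (h : V → ℕ)
    (h2 : ∀ x, #{y | G.Adj x y ∧ h x < h y} ≤ q)
    (h3 : ∀ y i, h y = i + 1 → ∃ x, G.Adj x y ∧ h x = i) (i : ℕ) :
    #{y | h y = i + 1} ≤ q * #{y | h y = i} := by
  have : ({y | h y = i + 1} : Finset V) ⊆
      ({y | h y = i} : Finset V).biUnion (fun x => {y | G.Adj x y ∧ h x < h y}) := by
    intro y
    simp only [mem_filter, mem_univ, true_and, mem_biUnion]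
    intro hy
    obtain ⟨x, hx, hxi⟩ := h3 y i hy
    exact ⟨x, hxi, hx, by omega⟩
  refine (card_le_card this).trans ?_
  rw [mul_comm]
  exact card_biUnion_le_card_mul _ _ _ (fun x _ => h2 x)

/-- the radial test function -/
noncomputable def abf {V : Type} (h : V → ℕ) (r : ℕ) (s : ℝ) (x : V) : ℝ :=
  if h x ≤ r then (s⁻¹) ^ (h x) else 0

lemma ab_top {V : Type} [Fintype V] [DecidableEq V] (q : ℕ) (s : ℝ) (hs : 0 < s)
    (hsq : s ^ 2 = q) (h : V → ℕ) (r : ℕ)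
    (hl : ∀ i, #{y | h y = i + 1} ≤ q * #{y | h y = i}) :
    ((r : ℝ) + 1) * (∑ x, if h x = r then abf h r s x ^ 2 else 0) ≤ ∑ x, abf h r s x ^ 2 := by
  set a : ℕ → ℝ := fun i => #{y | h y = i} * ((s⁻¹) ^ i) ^ 2 with ha
  have hanti : Antitone a := by
    refine antitone_nat_of_succ_le fun i => ?_
    have h1 : (#{y | h y = i + 1} : ℝ) ≤ q * #{y | h y = i} := by exact_mod_cast hl i
    simp only [ha]
    have h2 : ((s⁻¹) ^ (i+1)) ^ 2 * (q : ℝ) = ((s⁻¹) ^ i) ^ 2 := by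
      have h3 : s⁻¹ * s = 1 := inv_mul_cancel₀ hs.ne'
      calc _ = ((s⁻¹) ^ i) ^ 2 * (s⁻¹ * s) ^ 2 := by rw [← hsq]; ring
        _ = _ := by rw [h3]; ring
    calc _ ≤ (q * #{y | h y = i} : ℝ) * ((s⁻¹) ^ (i+1)) ^ 2 := by gcongr
      _ = #{y | h y = i} * (((s⁻¹) ^ (i+1)) ^ 2 * (q : ℝ)) := by ring
      _ = _ := by rw [h2]
  have e1 : (∑ x, if h x = r then abf h r s x ^ 2 else 0) = a r := by
    rw [← sum_filter]
    simp only [ha]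
    rw [← nsmul_eq_mul]
    apply sum_eq_card_nsmul
    intro x hx
    simp at hx
    simp [abf, hx]
  have e2 : ∑ x, abf h r s x ^ 2 = ∑ i ∈ range (r+1), a i := by
    have : ∀ x, abf h r s x ^ 2 = ∑ i ∈ range (r+1), if h x = i then ((s⁻¹) ^ i) ^ 2 else 0 := by
      intro x
      rw [sum_ite_eq]
      simp only [abf, mem_range, Nat.lt_succ_iff]
      split_ifs <;> simp
    simp_rw [this]
    rw [sum_comm]
    refine sum_congr rfl fun i _ => ?_
    rw [← sum_filter, sum_const, nsmul_eq_mul]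
  rw [e1, e2]
  calc ((r : ℝ) + 1) * a r = ∑ i ∈ range (r+1), a r := by simp
    _ ≤ _ := sum_le_sum fun i hi => hanti (by simp at hi; omega)

lemma ab_energy {V : Type} [Fintype V] [DecidableEq V] (G : SimpleGraph V) [DecidableRel G.Adj]
    (q : ℕ) (s : ℝ) (hs : 1 ≤ s) (hsq : s ^ 2 = q) (h : V → ℕ) (r : ℕ)
    (h1 : ∀ x y, G.Adj x y → h y ≤ h x + 1)
    (h2 : ∀ x, #{y | G.Adj x y ∧ h x < h y} ≤ q) :
    (∑ x, ∑ y, if G.Adj x y then (abf h r s x - abf h r s y) ^ 2 else 0) / 2 ≤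
      (s - 1) ^ 2 * ∑ x, abf h r s x ^ 2 +
      (2 * s - 1) * ∑ x, if h x = r then abf h r s x ^ 2 else 0 := by
  have hs0 : 0 < s := by linarith
  set f := abf h r s with hf
  set U : V → V → ℝ := fun x y => if G.Adj x y ∧ h x < h y then (f x - f y) ^ 2 else 0 with hU
  have e1 : (∑ x, ∑ y, if G.Adj x y then (f x - f y) ^ 2 else 0) =
      ∑ x, ∑ y, U x y + ∑ x, ∑ y, U y x := by
    rw [← sum_add_distrib]
    refine sum_congr rfl fun x _ => ?_
    rw [← sum_add_distrib]
    refine sum_congr rfl fun y _ => ?_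
    simp only [hU, G.adj_comm y x]
    by_cases hxy : G.Adj x y
    · rcases lt_trichotomy (h x) (h y) with hlt | heq | hgt
      · simp [hxy, hlt, hlt.le, not_lt.mpr hlt.le]
      · simp [hxy, heq, hf, abf]
      · simp [hxy, hgt, not_lt.mpr hgt.le]; ring
    · simp [hxy]
  have e2 : ∑ x, ∑ y, U y x = ∑ x, ∑ y, U x y := sum_comm
  rw [e1, e2, ← two_mul, mul_div_cancel_left₀ _ (two_ne_zero), mul_sum, mul_sum,
    ← sum_add_distrib]
  refine sum_le_sum fun x _ => ?_
  simp only [hU]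
  rw [← sum_filter]
  set B : ℝ := if h x = r then f x ^ 2 else f x ^ 2 * (1 - s⁻¹) ^ 2 with hB
  have hB0 : 0 ≤ B := by rw [hB]; split_ifs <;> positivity
  have hb : ∀ y ∈ ({y | G.Adj x y ∧ h x < h y} : Finset V), (f x - f y) ^ 2 ≤ B := by
    intro y hy
    simp only [mem_filter, mem_univ, true_and] at hy
    have hy1 : h y = h x + 1 := by have := h1 x y hy.1; omega
    simp only [hB, hf, abf, hy1]
    rcases lt_trichotomy (h x) r with hlt | heq | hgt
    · rw [if_pos hlt.le, if_pos (by omega), if_neg (by omega)]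
      apply le_of_eq; ring
    · simp [heq]
    · rw [if_neg (by omega), if_neg (by omega), if_neg (by omega)]; simp
  refine (sum_le_card_nsmul _ _ _ hb).trans ?_
  rw [nsmul_eq_mul]
  have h2' : (#{y | G.Adj x y ∧ h x < h y} : ℝ) ≤ q := by exact_mod_cast h2 x
  refine (mul_le_mul_of_nonneg_right h2' hB0).trans ?_
  rw [hB, ← hsq]
  split_ifs
  · apply le_of_eq; ring
  · apply le_of_eq; field_simp; ring

lemma ab_card {V : Type} [Fintype V] [DecidableEq V] (q k : ℕ) (h : V → ℕ) (r : ℕ)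
    (hl : ∀ i, #{y | h y = i + 1} ≤ q * #{y | h y = i}) (h0 : #{y | h y = 0} ≤ k + 1) :
    #{y | h y ≤ r} ≤ ∑ i ∈ range (r+1), q ^ i * (k + 1) := by
  have hi : ∀ i, #{y | h y = i} ≤ q ^ i * (k + 1) := by
    intro i
    induction i with
    | zero => simpa using h0
    | succ i ih =>
      refine (hl i).trans ?_
      rw [pow_succ']
      rw [mul_assoc]
      exact Nat.mul_le_mul_left _ ih
  have : ({y | h y ≤ r} : Finset V) ⊆ (range (r+1)).biUnion (fun i => {y | h y = i}) := by
    intro y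
    simp
  exact (card_le_card this).trans (card_biUnion_le.trans (sum_le_sum fun i _ => hi i))

lemma ab_main (k : ℕ) (hk : 3 ≤ k) (s : ℝ) (hs : 1 ≤ s) (hsq : s ^ 2 = (k : ℝ) - 1)
    (r : ℕ) (c : ℝ) (hc0 : 0 < c) {V : Type} [Fintype V] [DecidableEq V]
    (G : SimpleGraph V) [DecidableRel G.Adj]
    (hc : G.Connected) (hr : G.IsRegularOfDegree k)
    (hcc : c ≤ 2 * s - (2 * s - 1) / (r + 1) -
      k * (∑ i ∈ range (r+1), (k - 1) ^ i * (k + 1) : ℕ) / Fintype.card V) :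
    ∃ lam : ℝ, lam ≠ (k : ℝ) ∧
          (∃ v : V → ℝ, v ≠ 0 ∧ Matrix.mulVec (SimpleGraph.adjMatrix ℝ G) v = lam • v) ∧
          c ≤ lam := by
  obtain ⟨h, h1, h2, h3, h4, v, hv⟩ := ab_height G hc k hr
  have hq : s ^ 2 = ((k - 1 : ℕ) : ℝ) := by rw [hsq]; push_cast [show 1 ≤ k by omega]; ring
  have hl := ab_level G (k-1) h h2 h3
  have hE := ab_energy G (k-1) s hs hq h r h1 h2
  have hT := ab_top (k-1) s (by linarith) hq h r hl
  have hC := ab_card (k-1) k h r hl h4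
  set f := abf h r s with hf
  set n : ℝ := ((Fintype.card V : ℕ) : ℝ) with hn
  have hne : Nonempty V := ⟨v⟩
  have hn0 : 0 < n := by rw [hn]; exact_mod_cast Fintype.card_pos
  have hf0 : f ≠ 0 := by
    intro h0
    have := congrFun h0 v
    simp [hf, abf, hv] at this
  set F := ∑ x, f x ^ 2 with hF
  have hF0 : 0 ≤ F := by positivity
  have hff : f ⬝ᵥ f = F := by simp [dotProduct, hF, pow_two]
  have hlap : ∀ w : V → ℝ, G.lapMatrix ℝ *ᵥ w = (k : ℝ) • w - G.adjMatrix ℝ *ᵥ w := by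
    intro w
    ext x
    rw [SimpleGraph.lapMatrix_mulVec_apply, hr x]
    simp [SimpleGraph.adjMatrix_mulVec_apply]
  have hA : f ⬝ᵥ (G.adjMatrix ℝ *ᵥ f) = k * F -
      (∑ x, ∑ y, if G.Adj x y then (f x - f y) ^ 2 else 0) / 2 := by
    rw [← SimpleGraph.lapMatrix_toLinearMap₂', Matrix.toLinearMap₂'_apply', hlap,
      dotProduct_sub, dotProduct_smul, hff, smul_eq_mul]
    ring
  have hsum : (∑ x, f x) ^ 2 ≤ (∑ i ∈ range (r+1), (k - 1) ^ i * (k + 1) : ℕ) * F := by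
    have e : ∑ x, f x = ∑ x ∈ ({y | h y ≤ r} : Finset V), f x := by
      rw [sum_filter]
      refine sum_congr rfl fun x _ => ?_
      simp only [hf, abf]
      split_ifs <;> rfl
    rw [e]
    refine sq_sum_le_card_mul_sum_sq.trans ?_
    refine mul_le_mul (by exact_mod_cast hC) ?_ (by positivity) (by positivity)
    exact sum_le_sum_of_subset_of_nonneg (subset_univ _) (fun _ _ _ => by positivity)
  set M : Matrix V V ℝ := G.adjMatrix ℝ - Matrix.of (fun _ _ => (k : ℝ) / n) with hM
  have hMv : ∀ w : V → ℝ, M *ᵥ w = G.adjMatrix ℝ *ᵥ w - fun _ => (k : ℝ) / n * ∑ x, w x := by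
    intro w
    rw [hM, Matrix.sub_mulVec]
    congr 1
    ext x
    simp [Matrix.mulVec, dotProduct, mul_sum]
  have hMH : M.IsHermitian := by
    refine Matrix.IsHermitian.sub (SimpleGraph.isHermitian_adjMatrix ℝ G) ?_
    ext i j; simp
  obtain ⟨μ, hμ, w, hw, hMw⟩ := ab_spectral M hMH f hf0 c (by
    rw [hMv, dotProduct_sub, hff, hA]
    have e : (f ⬝ᵥ fun _ => (k : ℝ) / n * ∑ x, f x) = k / n * (∑ x, f x) ^ 2 := by
      simp only [dotProduct]
      rw [← sum_mul]; ring
    rw [e]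
    set T := ∑ x, if h x = r then f x ^ 2 else 0
    set K : ℝ := ((∑ i ∈ range (r+1), (k - 1) ^ i * (k + 1) : ℕ) : ℝ)
    have t1 : k / n * (∑ x, f x) ^ 2 ≤ k / n * (K * F) := by gcongr
    have t2 : T ≤ F / (r + 1) := by
      rw [le_div_iff₀ (by positivity)]; linarith
    have t3 : (2 * s - 1) * T ≤ (2 * s - 1) * (F / (r + 1)) :=
      mul_le_mul_of_nonneg_left t2 (by linarith)
    have t4 := mul_le_mul_of_nonneg_right hcc hF0
    have t5 : (2 * s - (2 * s - 1) / (r + 1) - k * K / n) * F =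
      2 * s * F - (2 * s - 1) * (F / (r + 1)) - k / n * (K * F) := by ring
    have t6 : (s - 1) ^ 2 * F = k * F - 2 * s * F := by
      have : (s - 1) ^ 2 = k - 2 * s := by linarith [hsq, show (s-1)^2 = s^2 - 2*s + 1 by ring]
      rw [this]; ring
    linarith)
  -- the eigenvector has zero sum
  have hsumA : ∑ x, (G.adjMatrix ℝ *ᵥ w) x = k * ∑ x, w x := by
    have h5 : G.lapMatrix ℝ *ᵥ (fun _ => (1:ℝ)) = 0 := G.lapMatrix_mulVec_const_eq_zero (R := ℝ)
    have h6 : (fun _ => (1:ℝ)) ⬝ᵥ (G.lapMatrix ℝ *ᵥ w) = 0 := by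
      rw [dotProduct_mulVec, ← Matrix.mulVec_transpose, (G.isSymm_lapMatrix (R := ℝ)).eq, h5,
        zero_dotProduct]
    rw [hlap, dotProduct_sub] at h6
    simp only [dotProduct, one_mul, Pi.smul_apply, smul_eq_mul, ← mul_sum] at h6
    linarith
  have hw0 : ∑ x, w x = 0 := by
    have := congrArg (fun g : V → ℝ => ∑ x, g x) hMw
    simp only [hMv, Pi.sub_apply, sum_sub_distrib, hsumA, Pi.smul_apply, smul_eq_mul, ← mul_sum,
      sum_const, card_univ, nsmul_eq_mul] at this
    rw [← hn] at this
    have e : k / n * (n * ∑ x, w x) = k * ∑ x, w x := by field_simp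
    rw [e, sub_self] at this
    rcases mul_eq_zero.mp this.symm with hz | hz
    · linarith
    · exact hz
  have hAw : G.adjMatrix ℝ *ᵥ w = μ • w := by
    rw [← hMw, hMv, hw0]
    ext x; simp
  refine ⟨μ, ?_, ⟨w, hw, hAw⟩, hμ⟩
  rintro rfl
  have h7 : G.lapMatrix ℝ *ᵥ w = 0 := by rw [hlap, hAw, sub_self]
  rw [SimpleGraph.lapMatrix_mulVec_eq_zero_iff_forall_reachable] at h7
  apply hw
  ext x
  have h8 : ∑ y, w y = n * w x := by
    rw [sum_congr rfl (fun y _ => h7 y x (hc.preconnected y x))]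
    simp [hn]
  rw [hw0] at h8
  rcases mul_eq_zero.mp h8.symm with hz | hz
  · linarith
  · exact hz

/-- (Alon–Boppana) For `k ≥ 3` and every `ε > 0` there is `N` such that every finite
connected `k`-regular simple graph on more than `N` vertices has an adjacency eigenvalue
`λ ≠ k` with `|λ| ≥ 2√(k−1) − ε`. -/
theorem stmt_2 (k : ℕ) (hk : 3 ≤ k) (ε : ℝ) (hε : 0 < ε) :
    ∃ N : ℕ, ∀ (V : Type) [Fintype V] (G : SimpleGraph V) [DecidableRel G.Adj],
      G.Connected → G.IsRegularOfDegree k → N < Fintype.card V →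
        ∃ lam : ℝ, lam ≠ (k : ℝ) ∧
          (∃ v : V → ℝ, v ≠ 0 ∧ Matrix.mulVec (SimpleGraph.adjMatrix ℝ G) v = lam • v) ∧
          2 * Real.sqrt (k - 1) - ε ≤ |lam| := by
  have hk' : (3 : ℝ) ≤ k := by exact_mod_cast hk
  set s := Real.sqrt (k - 1) with hs
  have hsq : s ^ 2 = (k : ℝ) - 1 := Real.sq_sqrt (by linarith)
  have hs1 : 1 ≤ s := by rw [hs]; exact Real.one_le_sqrt.mpr (by linarith)
  set δ := min ε 1 with hδ
  have hδ0 : 0 < δ := lt_min hε one_pos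
  have hδ1 : δ ≤ 1 := min_le_right _ _
  have hδε : δ ≤ ε := min_le_left _ _
  obtain ⟨r, hr⟩ := exists_nat_ge ((2 * s - 1) / (δ / 2))
  set K : ℝ := ((∑ i ∈ range (r+1), (k - 1) ^ i * (k + 1) : ℕ) : ℝ) with hK
  obtain ⟨N, hN⟩ := exists_nat_ge (k * K / (δ / 2))
  refine ⟨N, fun V _ G _ hc hreg hcard => ?_⟩
  classical
  have hcard' : (N : ℝ) < Fintype.card V := by exact_mod_cast hcard
  have hn0 : (0 : ℝ) < Fintype.card V := lt_of_le_of_lt (Nat.cast_nonneg N) hcard'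
  have a1 : (2 * s - 1) / (r + 1) ≤ δ / 2 := by
    rw [div_le_iff₀ (by positivity)] at hr ⊢
    nlinarith
  have a2 : k * K / Fintype.card V ≤ δ / 2 := by
    rw [div_le_iff₀ (by positivity)] at hN ⊢
    nlinarith
  obtain ⟨lam, hl1, hl2, hl3⟩ := ab_main k hk s hs1 hsq r (2 * s - δ) (by linarith) G hc hreg
    (by linarith)
  exact ⟨lam, hl1, hl2, by linarith [le_abs_self lam]⟩
end

section
/- Let k ≥ 3 and d ≥ 1 be integers. Every finite connected simple graph Γ of maximum degree at most k and diameter at most d that contains at least one vertex of degree strictly less than k satisfies |V(Γ)| ≤ M(k,d) − ((k−1)^d − 1)/(k−2). -/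
theorem exists_pred {V : Type*} (G : SimpleGraph V) (hconn : G.Connected) (v u : V) (i : ℕ)
    (h : G.dist v u = i + 1) : ∃ w, G.Adj u w ∧ G.dist v w = i := by
  obtain ⟨p, hp⟩ := hconn.exists_walk_length_eq_dist u v
  rw [SimpleGraph.dist_comm, h] at hp
  cases p with
  | nil => simp at hp
  | @cons _ w _ hadj q =>
    refine ⟨w, hadj, ?_⟩
    simp at hp
    have h1 := SimpleGraph.dist_le q
    have h2 := hconn.dist_triangle (u := v) (v := w) (w := u)
    have h3 : G.dist w u = 1 := SimpleGraph.dist_eq_one_iff_adj.2 hadj.symm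
    rw [SimpleGraph.dist_comm] at h1
    omega

theorem level_bound {V : Type*} [Fintype V] (k : ℕ) (G : SimpleGraph V) [DecidableRel G.Adj]
    (hconn : G.Connected) (hdeg : ∀ v : V, G.degree v ≤ k) (v : V) (hv : G.degree v < k) (i : ℕ) :
    (Finset.univ.filter (fun u => G.dist v u = i)).card ≤ (k - 1) ^ i := by
  classical
  induction i with
  | zero =>
    rw [pow_zero, Finset.card_le_one]
    intro a ha b hb
    simp [hconn.dist_eq_zero_iff] at ha hb
    rw [← ha, ← hb]
  | succ i ih =>
    have hsub : Finset.univ.filter (fun u => G.dist v u = i + 1) ⊆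
        (Finset.univ.filter (fun u => G.dist v u = i)).biUnion
          (fun w => (G.neighborFinset w).filter (fun u => G.dist v u = i + 1)) := by
      intro u hu
      simp only [Finset.mem_filter, Finset.mem_univ, true_and] at hu
      obtain ⟨w, hw, hd⟩ := exists_pred G hconn v u i hu
      simp only [Finset.mem_biUnion, Finset.mem_filter, Finset.mem_univ, true_and,
        SimpleGraph.mem_neighborFinset]
      exact ⟨w, hd, hw.symm, hu⟩
    refine (Finset.card_le_card hsub).trans ?_
    refine (Finset.card_biUnion_le_card_mul _ _ (k - 1) ?_).trans ?_
    · intro w hw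
      simp only [Finset.mem_filter, Finset.mem_univ, true_and] at hw
      have hdw := hdeg w
      cases i with
      | zero =>
        rw [hconn.dist_eq_zero_iff] at hw
        subst hw
        refine (Finset.card_filter_le _ _).trans ?_
        rw [SimpleGraph.card_neighborFinset_eq_degree]
        omega
      | succ j =>
        obtain ⟨x, hx, hxd⟩ := exists_pred G hconn v w j hw
        have hlt : ((G.neighborFinset w).filter (fun u => G.dist v u = j + 1 + 1)).card
            < (G.neighborFinset w).card := by
          apply Finset.card_lt_card
          rw [Finset.filter_ssubset]
          exact ⟨x, by simpa using hx, by omega⟩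
        rw [SimpleGraph.card_neighborFinset_eq_degree] at hlt
        omega
    · rw [pow_succ]
      exact Nat.mul_le_mul_right _ ih

/-- A connected graph of maximum degree at most `k`, diameter at most `d`, having a
vertex of degree strictly less than `k`, has order at most `M(k,d) − ((k−1)^d − 1)/(k−2)`. -/
theorem stmt_3 (k d : ℕ) (hk : 3 ≤ k) (hd : 1 ≤ d)
    (V : Type*) [Fintype V] (G : SimpleGraph V) [DecidableRel G.Adj]
    (hconn : G.Connected) (hdeg : ∀ v : V, G.degree v ≤ k)
    (hdiam : ∀ u v : V, G.dist u v ≤ d)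
    (hsmall : ∃ v : V, G.degree v < k) :
    (Fintype.card V : ℚ) ≤ (mooreBound k d : ℚ) - (((k : ℚ) - 1) ^ d - 1) / ((k : ℚ) - 2) := by
  classical
  obtain ⟨v, hv⟩ := hsmall
  have hcard : Fintype.card V ≤ ∑ i ∈ Finset.range (d + 1), (k - 1) ^ i := by
    rw [← Finset.card_univ, Finset.card_eq_sum_card_fiberwise (f := fun u => G.dist v u)
      (t := Finset.range (d + 1)) (fun u _ => by
        have := hdiam v u
        simp only [Finset.coe_range, Set.mem_Iio]
        omega)]
    exact Finset.sum_le_sum fun i _ => level_bound k G hconn hdeg v hv i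
  have hq : (Fintype.card V : ℚ) ≤ ∑ i ∈ Finset.range (d + 1), ((k : ℚ) - 1) ^ i := by
    have h1 : ((k - 1 : ℕ) : ℚ) = (k : ℚ) - 1 := by
      rw [Nat.cast_sub (by omega)]; simp
    rw [← h1]
    exact_mod_cast hcard
  have hk' : (3 : ℚ) ≤ k := by exact_mod_cast hk
  have hgeom : (((k : ℚ) - 1) ^ d - 1) / ((k : ℚ) - 2)
      = ∑ i ∈ Finset.range d, ((k : ℚ) - 1) ^ i := by
    rw [geom_sum_eq (by linarith)]
    congr 1
    ring
  have hm : (mooreBound k d : ℚ) = 1 + k * ∑ i ∈ Finset.range d, ((k : ℚ) - 1) ^ i := by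
    unfold mooreBound
    rw [← Finset.mul_sum]
    push_cast [Nat.cast_sub (show 1 ≤ k by omega)]
    rfl
  rw [hgeom, hm]
  refine hq.trans (le_of_eq ?_)
  rw [geom_sum_succ]
  ring
end

section
/- For all integers k ≥ 3 and d ≥ 0, G_{k,d}(2√(k−1)) = (d+1)·(√(k−1))^d + d·(√(k−1))^{d−1}. -/
/-- The polynomials `G_{k,i}(x)` defined by `G_{k,0}(x) = 1`, `G_{k,1}(x) = x + 1`,
`G_{k,i+1}(x) = x·G_{k,i}(x) − (k−1)·G_{k,i−1}(x)`. -/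
def Gpol (k : ℕ) : ℕ → ℝ → ℝ
  | 0, _ => 1
  | 1, x => x + 1
  | (i + 2), x => x * Gpol k (i + 1) x - (k - 1 : ℝ) * Gpol k i x

/-- `G_{k,d}(2√(k−1)) = (d+1)(√(k−1))^d + d(√(k−1))^{d−1}`. -/
theorem stmt_10 (k d : ℕ) (hk : 3 ≤ k) :
    Gpol k d (2 * Real.sqrt ((k : ℝ) - 1))
      = (d + 1 : ℝ) * (Real.sqrt ((k : ℝ) - 1)) ^ d
        + (d : ℝ) * (Real.sqrt ((k : ℝ) - 1)) ^ (d - 1) := by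
  have hs : ((k : ℝ) - 1) = Real.sqrt ((k : ℝ) - 1) ^ 2 := by
    have h3 : (3 : ℝ) ≤ k := by exact_mod_cast hk
    rw [Real.sq_sqrt (by linarith)]
  generalize Real.sqrt ((k : ℝ) - 1) = s at hs ⊢
  induction d using Nat.twoStepInduction with
  | zero => simp [Gpol]
  | one => norm_num [Gpol]
  | more n ih1 ih2 =>
    rw [Gpol, ih1, ih2, hs]
    rcases n with _ | n
    · simp; ring
    · simp only [Nat.add_sub_cancel, show n + 1 + 2 - 1 = n + 2 by omega]
      push_cast
      ring
end

section
/- For all integers k ≥ 3 and d ≥ 0, G_{k,d}(−2√(k−1)) = (−1)^d·((d+1)·(√(k−1))^d − d·(√(k−1))^{d−1}). -/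
/-- `G_{k,d}(−2√(k−1)) = (−1)^d((d+1)(√(k−1))^d − d(√(k−1))^{d−1})`. -/
theorem stmt_11 (k d : ℕ) (hk : 3 ≤ k) :
    Gpol k d (-(2 * Real.sqrt ((k : ℝ) - 1)))
      = (-1 : ℝ) ^ d * ((d + 1 : ℝ) * (Real.sqrt ((k : ℝ) - 1)) ^ d
        - (d : ℝ) * (Real.sqrt ((k : ℝ) - 1)) ^ (d - 1)) := by
  have hk' : (3 : ℝ) ≤ (k : ℝ) := by exact_mod_cast hk
  have hs : Real.sqrt ((k : ℝ) - 1) ^ 2 = (k : ℝ) - 1 := Real.sq_sqrt (by linarith)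
  generalize Real.sqrt ((k : ℝ) - 1) = s at hs ⊢
  induction d using Nat.twoStepInduction with
  | zero => simp [Gpol]
  | one => simp [Gpol]; ring
  | more n ih0 ih1 =>
    rw [Gpol, ih0, ih1, ← hs]
    cases n with
    | zero => norm_num; ring
    | succ m =>
      simp only [Nat.add_sub_cancel, show m + 1 + 2 - 1 = m + 2 from rfl]
      push_cast
      ring
end

section
/- Let k ≥ 3 and d ≥ 0 be integers. For every real x with 2√(k−1) < x < k, one has G_{k,d}(x) > 0. -/
/-- For `2√(k−1) < x < k`, one has `G_{k,d}(x) > 0`. -/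
theorem stmt_12 (k d : ℕ) (hk : 3 ≤ k) (x : ℝ)
    (hx1 : 2 * Real.sqrt ((k : ℝ) - 1) < x) (hx2 : x < (k : ℝ)) :
    0 < Gpol k d x := by
  set s := Real.sqrt ((k : ℝ) - 1) with hs
  have hk' : (3 : ℝ) ≤ k := by exact_mod_cast hk
  have hs2 : s * s = (k : ℝ) - 1 := Real.mul_self_sqrt (by linarith)
  have hs0 : 0 < s := Real.sqrt_pos.mpr (by linarith)
  have key : ∀ i : ℕ, 0 < Gpol k i x ∧ s * Gpol k i x < Gpol k (i + 1) x := by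
    intro i
    induction i with
    | zero =>
      simp only [Gpol]
      constructor <;> linarith
    | succ i ih =>
      obtain ⟨h0, h1⟩ := ih
      have h2 : 0 < Gpol k (i + 1) x := lt_trans (mul_pos hs0 h0) h1
      refine ⟨h2, ?_⟩
      have h3 : Gpol k (i + 1 + 1) x
          = x * Gpol k (i + 1) x - ((k : ℝ) - 1) * Gpol k i x := by
        simp only [Gpol]
      rw [h3, ← hs2]
      have h4 := mul_lt_mul_of_pos_right hx1 h2
      have h5 := mul_lt_mul_of_pos_left h1 hs0
      linarith
  exact (key d).1
end

section
/- Let k ≥ 3 be an integer and let x be a real number with 2√(k−1) < x < k. If d is a positive integer satisfying d·√(x² − 4k + 4) > x, then the derivative of the polynomial function y ↦ G_{k,d}(y) at the point x is strictly positive. -/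
/-- Induction invariant: beyond `2s`, where `s² = k - 1`, both `G` and its derivative grow at
least by a factor `s` at each step. -/
theorem Gpol_aux (k : ℕ) (x s : ℝ) (hs : 0 < s) (hsq : s * s = (k : ℝ) - 1) (hx : 2 * s < x)
    (i : ℕ) : ∃ a b : ℝ, HasDerivAt (Gpol k i) a x ∧ HasDerivAt (Gpol k (i + 1)) b x ∧
      0 < b ∧ s * a ≤ b ∧ 0 < Gpol k (i + 1) x ∧ s * Gpol k i x ≤ Gpol k (i + 1) x := by
  induction i with
  | zero =>
    refine ⟨0, 1, ?_, ?_, by norm_num, by simp, ?_, ?_⟩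
    · have h : Gpol k 0 = fun _ => (1 : ℝ) := by funext y; simp [Gpol]
      rw [h]; exact hasDerivAt_const x 1
    · have h : Gpol k (0 + 1) = fun y => y + 1 := by funext y; simp [Gpol]
      rw [h]; exact (hasDerivAt_id x).add_const 1
    · simp only [Gpol]; linarith
    · simp only [Gpol]; linarith
  | succ i ih =>
    obtain ⟨a, b, ha, hb, hb0, hab, hG, hGG⟩ := ih
    have hrec : Gpol k (i + 1 + 1) =
        fun y => y * Gpol k (i + 1) y - ((k : ℝ) - 1) * Gpol k i y := by
      funext y; simp [Gpol]
    have hD : s * b ≤ 1 * Gpol k (i + 1) x + x * b - ((k : ℝ) - 1) * a := by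
      rw [← hsq]
      nlinarith [mul_le_mul_of_nonneg_left hab hs.le, mul_lt_mul_of_pos_right hx hb0]
    have hE : s * Gpol k (i + 1) x ≤ x * Gpol k (i + 1) x - ((k : ℝ) - 1) * Gpol k i x := by
      rw [← hsq]
      nlinarith [mul_le_mul_of_nonneg_left hGG hs.le, mul_lt_mul_of_pos_right hx hG]
    refine ⟨b, 1 * Gpol k (i + 1) x + x * b - ((k : ℝ) - 1) * a, hb, ?_, ?_, hD, ?_, ?_⟩
    · rw [hrec]
      exact ((hasDerivAt_id x).mul hb).sub (ha.const_mul ((k : ℝ) - 1))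
    · exact lt_of_lt_of_le (mul_pos hs hb0) hD
    · rw [hrec]; exact lt_of_lt_of_le (mul_pos hs hG) hE
    · rw [hrec]; exact hE

/-- If `2√(k−1) < x < k` and `d√(x² − 4k + 4) > x` with `d ≥ 1`, then the derivative of
`y ↦ G_{k,d}(y)` at `x` is positive. -/
theorem stmt_13 (k : ℕ) (hk : 3 ≤ k) (x : ℝ)
    (hx1 : 2 * Real.sqrt ((k : ℝ) - 1) < x) (hx2 : x < (k : ℝ))
    (d : ℕ) (hd : 0 < d) (hdx : (d : ℝ) * Real.sqrt (x ^ 2 - 4 * k + 4) > x) :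
    0 < deriv (fun y : ℝ => Gpol k d y) x := by
  have hk' : (3 : ℝ) ≤ k := by exact_mod_cast hk
  obtain ⟨e, rfl⟩ : ∃ e, d = e + 1 := ⟨d - 1, by omega⟩
  obtain ⟨a, b, -, hb, hb0, -⟩ := Gpol_aux k x (Real.sqrt ((k : ℝ) - 1))
    (Real.sqrt_pos.mpr (by linarith)) (Real.mul_self_sqrt (by linarith)) hx1 e
  have h : deriv (fun y : ℝ => Gpol k (e + 1) y) x = b := hb.deriv
  rw [h]
  exact hb0
end

section
/- Let k ≥ 3 be an integer and let d be an even positive integer. For every real x with −k < x < −2√(k−1), one has G_{k,d}(x) > 0. -/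
/-- For even `d ≥ 1` and `−k < x < −2√(k−1)`, one has `G_{k,d}(x) > 0`. -/
theorem stmt_14 (k d : ℕ) (hk : 3 ≤ k) (hd : Even d) (hdpos : 0 < d) (x : ℝ)
    (hx1 : -(k : ℝ) < x) (hx2 : x < -(2 * Real.sqrt ((k : ℝ) - 1))) :
    0 < Gpol k d x := by
  have hk' : (3 : ℝ) ≤ k := by exact_mod_cast hk
  obtain ⟨s, hs⟩ : ∃ s, s = Real.sqrt ((k : ℝ) - 1) := ⟨_, rfl⟩
  have hsq : s * s = (k : ℝ) - 1 := by
    rw [hs]; exact Real.mul_self_sqrt (by linarith)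
  have hs0 : 0 ≤ s := by rw [hs]; exact Real.sqrt_nonneg _
  have hs1 : 1 < s := by nlinarith
  rw [← hs] at hx2
  have key : ∀ i : ℕ, 0 < (-1 : ℝ) ^ i * Gpol k i x ∧
      s * ((-1 : ℝ) ^ i * Gpol k i x) ≤ (-1 : ℝ) ^ (i + 1) * Gpol k (i + 1) x := by
    intro i
    induction i with
    | zero =>
      simp only [Gpol, pow_zero, zero_add, pow_one]
      constructor <;> linarith
    | succ n ih =>
      obtain ⟨h1, h2⟩ := ih
      have h3 : 0 < (-1 : ℝ) ^ (n + 1) * Gpol k (n + 1) x :=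
        lt_of_lt_of_le (mul_pos (by linarith) h1) h2
      refine ⟨h3, ?_⟩
      have e : (-1 : ℝ) ^ (n + 1 + 1) * Gpol k (n + 1 + 1) x
          = (-x) * ((-1 : ℝ) ^ (n + 1) * Gpol k (n + 1) x)
            - s * (s * ((-1 : ℝ) ^ n * Gpol k n x)) := by
        rw [← mul_assoc s s, hsq]
        simp only [Gpol, pow_succ]
        ring
      rw [e]
      have h4 := mul_le_mul_of_nonneg_left h2 hs0
      have h5 : 2 * s * ((-1 : ℝ) ^ (n + 1) * Gpol k (n + 1) x)
          ≤ (-x) * ((-1 : ℝ) ^ (n + 1) * Gpol k (n + 1) x) :=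
        mul_le_mul_of_nonneg_right (by linarith) h3.le
      linarith
  have h := (key d).1
  rwa [hd.neg_one_pow, one_mul] at h
end

section
/- Let k ≥ 3 be an integer and let d be an even positive integer. For every real x with −k < x < −2√(k−1), the derivative of the polynomial function y ↦ G_{k,d}(y) at the point x is strictly negative; consequently G_{k,d} is strictly decreasing on the interval [−k, −2√(k−1)], and G_{k,d}(x) ≥ G_{k,d}(−2√(k−1)) for all x in that interval. -/
/-- The formal derivative of `Gpol`. -/
def Dpol (k : ℕ) : ℕ → ℝ → ℝ
  | 0, _ => 0
  | 1, _ => 1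
  | (i + 2), x => Gpol k (i + 1) x + x * Dpol k (i + 1) x - (k - 1 : ℝ) * Dpol k i x

theorem Gpol_hasDerivAt (k : ℕ) (x : ℝ) : ∀ i : ℕ,
    HasDerivAt (fun y => Gpol k i y) (Dpol k i x) x
  | 0 => by simpa [Gpol, Dpol] using hasDerivAt_const x (1 : ℝ)
  | 1 => by simpa [Gpol, Dpol] using (hasDerivAt_id x).add_const (1 : ℝ)
  | (i + 2) => by
    have h1 := Gpol_hasDerivAt k x (i + 1)
    have h0 := Gpol_hasDerivAt k x i
    have h := ((hasDerivAt_id x).mul h1).sub (h0.const_mul (k - 1 : ℝ))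
    have e : Dpol k (i + 2) x = 1 * Gpol k (i + 1) x + id x * Dpol k (i + 1) x
        - (k - 1 : ℝ) * Dpol k i x := by
      rw [Dpol, one_mul, id]
    rw [e]
    refine h.congr_of_eventuallyEq (Filter.Eventually.of_forall fun y => ?_)
    change Gpol k (i + 2) y = y * Gpol k (i + 1) y - (k - 1 : ℝ) * Gpol k i y
    rw [Gpol]

theorem Gpol_sign (k : ℕ) (x s : ℝ) (hs : 1 ≤ s) (hq : (k : ℝ) - 1 = s ^ 2)
    (hx : x ≤ -(2 * s)) (i : ℕ) :
    0 < (-1) ^ i * Gpol k i x ∧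
      s * ((-1) ^ i * Gpol k i x) ≤ (-1) ^ (i + 1) * Gpol k (i + 1) x ∧
      0 ≤ (-1) ^ (i + 1) * Dpol k i x ∧
      s * ((-1) ^ (i + 1) * Dpol k i x) < (-1) ^ (i + 2) * Dpol k (i + 1) x := by
  induction i with
  | zero =>
    simp only [Gpol, Dpol]
    norm_num
    linarith
  | succ i ih =>
    obtain ⟨h1, h2, h3, h4⟩ := ih
    have eG : (-1) ^ (i + 1 + 1) * Gpol k (i + 1 + 1) x =
        -x * ((-1) ^ (i + 1) * Gpol k (i + 1) x) - s ^ 2 * ((-1) ^ i * Gpol k i x) := by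
      rw [← hq]; simp only [Gpol]; ring
    have eD : (-1) ^ (i + 1 + 2) * Dpol k (i + 1 + 1) x =
        (-1) ^ (i + 1) * Gpol k (i + 1) x + -x * ((-1) ^ (i + 2) * Dpol k (i + 1) x)
          - s ^ 2 * ((-1) ^ (i + 1) * Dpol k i x) := by
      rw [← hq]; simp only [Dpol]; ring
    rw [eG, eD, show i + 1 + 1 = i + 2 from rfl]
    generalize (-1) ^ i * Gpol k i x = a at *
    generalize (-1) ^ (i + 1) * Gpol k (i + 1) x = a' at *
    generalize (-1) ^ (i + 1) * Dpol k i x = b at *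
    generalize (-1) ^ (i + 2) * Dpol k (i + 1) x = b' at *
    have ha' : 0 < a' := lt_of_lt_of_le (by positivity) h2
    have hb' : 0 < b' := lt_of_le_of_lt (by positivity) h4
    have m1 := mul_nonneg (show 0 ≤ -x - 2 * s by linarith) ha'.le
    have m2 := mul_nonneg (show 0 ≤ -x - 2 * s by linarith) hb'.le
    have m3 := mul_nonneg (show 0 ≤ s by linarith) (sub_nonneg.2 h2)
    have m4 := mul_nonneg (show 0 ≤ s by linarith) (sub_nonneg.2 h4.le)
    refine ⟨ha', by nlinarith, hb'.le, by nlinarith⟩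

/-- For even `d ≥ 1`: the derivative of `G_{k,d}` is negative on `(−k, −2√(k−1))`,
`G_{k,d}` is strictly decreasing on `[−k, −2√(k−1)]`, and on that interval
`G_{k,d}(x) ≥ G_{k,d}(−2√(k−1))`. -/
theorem stmt_15 (k d : ℕ) (hk : 3 ≤ k) (hd : Even d) (hdpos : 0 < d) :
    (∀ x : ℝ, -(k : ℝ) < x → x < -(2 * Real.sqrt ((k : ℝ) - 1)) →
        deriv (fun y : ℝ => Gpol k d y) x < 0) ∧
    StrictAntiOn (fun y : ℝ => Gpol k d y)
        (Set.Icc (-(k : ℝ)) (-(2 * Real.sqrt ((k : ℝ) - 1)))) ∧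
    (∀ x ∈ Set.Icc (-(k : ℝ)) (-(2 * Real.sqrt ((k : ℝ) - 1))),
        Gpol k d (-(2 * Real.sqrt ((k : ℝ) - 1))) ≤ Gpol k d x) := by
  have hk' : (3 : ℝ) ≤ k := by exact_mod_cast hk
  have hs : 1 ≤ Real.sqrt ((k : ℝ) - 1) := Real.one_le_sqrt.2 (by linarith)
  have hq : (k : ℝ) - 1 = Real.sqrt ((k : ℝ) - 1) ^ 2 := (Real.sq_sqrt (by linarith)).symm
  have key : ∀ x : ℝ, x < -(2 * Real.sqrt ((k : ℝ) - 1)) →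
      deriv (fun y : ℝ => Gpol k d y) x < 0 := by
    intro x hx
    rw [(Gpol_hasDerivAt k x d).deriv]
    obtain ⟨e, rfl⟩ : ∃ e, d = e + 1 := ⟨d - 1, by omega⟩
    obtain ⟨-, -, h3, h4⟩ := Gpol_sign k x _ hs hq hx.le e
    have h5 := lt_of_le_of_lt (mul_nonneg (by linarith) h3) h4
    rw [pow_succ, hd.neg_one_pow] at h5
    linarith
  have anti : StrictAntiOn (fun y : ℝ => Gpol k d y)
      (Set.Icc (-(k : ℝ)) (-(2 * Real.sqrt ((k : ℝ) - 1)))) := by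
    refine strictAntiOn_of_deriv_neg (convex_Icc _ _)
      (fun x _ => (Gpol_hasDerivAt k x d).continuousAt.continuousWithinAt) ?_
    intro x hx
    rw [interior_Icc] at hx
    exact key x hx.2
  refine ⟨fun x _ hx => key x hx, anti, fun x hx => ?_⟩
  exact anti.antitoneOn hx ⟨hx.1.trans hx.2, le_rfl⟩ hx.2
end

section
/- Let k ≥ 3 and d ≥ 3 be integers, and let Γ be a finite connected k-regular simple graph of diameter at most d whose girth g satisfies 3 ≤ g ≤ 2d − 2. Then |V(Γ)| ≤ M(k,d) − k; that is, the defect of Γ is at least k. -/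
section Helpers

open Finset

variable {V : Type*} [Fintype V] (G : SimpleGraph V) [DecidableRel G.Adj]

/-- The sphere of radius `i` about `v`. -/
noncomputable def layer (v : V) (i : ℕ) : Finset V := {u | G.dist v u = i}

/-- Neighbours of `u` at distance one less from `v`. -/
noncomputable def backN (v u : V) : Finset V := {w | G.Adj w u ∧ G.dist v w + 1 = G.dist v u}

/-- Neighbours of `u` at the same distance from `v`. -/
noncomputable def sameN (v u : V) : Finset V := {w | G.Adj w u ∧ G.dist v w = G.dist v u}

/-- Neighbours of `u` at distance one more from `v`. -/
noncomputable def fwdN (v u : V) : Finset V := {w | G.Adj u w ∧ G.dist v w = G.dist v u + 1}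

theorem exists_back (hconn : G.Connected) (v u : V) (h : 1 ≤ G.dist v u) :
    ∃ w, G.Adj w u ∧ G.dist v w + 1 = G.dist v u := by
  obtain ⟨p, hp⟩ := hconn.exists_walk_length_eq_dist v u
  have hadj := p.adj_getVert_succ (i := p.length - 1) (by omega)
  rw [show p.length - 1 + 1 = p.length by omega, p.getVert_length] at hadj
  refine ⟨_, hadj, ?_⟩
  have h1 := SimpleGraph.dist_le (p.take (p.length - 1))
  rw [SimpleGraph.Walk.take_length] at h1
  have h2 := hconn.dist_triangle (u := v) (v := p.getVert (p.length - 1)) (w := u)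
  rw [SimpleGraph.dist_eq_one_iff_adj.2 hadj] at h2
  omega

theorem deg_bound (k : ℕ) (hreg : G.IsRegularOfDegree k) (v u : V) :
    #(fwdN G v u) + #(backN G v u) + #(sameN G v u) ≤ k := by
  classical
  rw [← hreg u, ← G.card_neighborFinset_eq_degree, ← card_union_of_disjoint,
    ← card_union_of_disjoint]
  · apply card_le_card
    intro w
    simp only [fwdN, backN, sameN, mem_union, mem_filter, mem_univ, true_and,
      SimpleGraph.mem_neighborFinset, G.adj_comm w u]
    tauto
  · rw [disjoint_left]
    intro w
    simp only [fwdN, backN, sameN, mem_union, mem_filter, mem_univ, true_and]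
    omega
  · rw [disjoint_left]
    intro w
    simp only [fwdN, backN, sameN, mem_filter, mem_univ, true_and]
    omega

theorem count_edges (v : V) (i : ℕ) :
    ∑ u ∈ layer G v i, #(fwdN G v u) = ∑ u ∈ layer G v (i + 1), #(backN G v u) := by
  classical
  have := sum_card_bipartiteAbove_eq_sum_card_bipartiteBelow (s := layer G v i)
    (t := layer G v (i + 1)) (fun a b => G.Adj a b)
  convert this using 2 with u hu u hu
  · congr 1
    ext w
    simp only [layer, mem_filter, mem_univ, true_and] at hu
    simp only [fwdN, layer, bipartiteAbove, mem_filter, mem_univ, true_and, hu]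
    tauto
  · congr 1
    ext w
    simp only [layer, mem_filter, mem_univ, true_and] at hu
    simp only [backN, layer, bipartiteBelow, mem_filter, mem_univ, true_and, hu]
    constructor <;> rintro ⟨h1, h2⟩ <;> constructor <;> first | assumption | omega

theorem main_bound (k : ℕ) (hreg : G.IsRegularOfDegree k) (v : V) (i : ℕ) :
    ∑ u ∈ layer G v (i + 1), #(backN G v u) + ∑ u ∈ layer G v i, #(backN G v u)
      + ∑ u ∈ layer G v i, #(sameN G v u) ≤ k * #(layer G v i) := by
  rw [← count_edges, ← sum_add_distrib, ← sum_add_distrib, mul_comm]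
  exact sum_le_card_nsmul _ _ _ fun u _ => deg_bound G k hreg v u

theorem back_pos (hconn : G.Connected) (v : V) (i : ℕ) (u : V) (hu : u ∈ layer G v (i + 1)) :
    1 ≤ #(backN G v u) := by
  simp only [layer, mem_filter, mem_univ, true_and] at hu
  obtain ⟨w, hw⟩ := exists_back G hconn v u (by omega)
  exact card_pos.2 ⟨w, by simpa [backN] using hw⟩

theorem sum_back (hconn : G.Connected) (v : V) (i : ℕ) :
    #(layer G v (i + 1)) ≤ ∑ u ∈ layer G v (i + 1), #(backN G v u) := by
  rw [card_eq_sum_ones]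
  exact sum_le_sum fun u hu => back_pos G hconn v i u hu

theorem sum_back' (hconn : G.Connected) (v : V) (i : ℕ) (u : V) (hu : u ∈ layer G v (i + 1))
    (h2 : 2 ≤ #(backN G v u)) :
    #(layer G v (i + 1)) + 1 ≤ ∑ u ∈ layer G v (i + 1), #(backN G v u) := by
  rw [card_eq_sum_ones]
  exact sum_lt_sum (fun u hu => back_pos G hconn v i u hu) ⟨u, hu, h2⟩

theorem sum_same (v : V) (i : ℕ) (x y : V) (hx : x ∈ layer G v i) (hy : y ∈ layer G v i)
    (hxy : G.Adj x y) : 2 ≤ ∑ u ∈ layer G v i, #(sameN G v u) := by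
  classical
  have hsub : ({x, y} : Finset V) ⊆ layer G v i := by
    intro z hz
    simp only [mem_insert, mem_singleton] at hz
    rcases hz with rfl | rfl <;> assumption
  refine le_trans ?_ (sum_le_sum_of_subset hsub)
  rw [sum_pair hxy.ne]
  simp only [layer, mem_filter, mem_univ, true_and] at hx hy
  have h1 : 0 < #(sameN G v x) := card_pos.2 ⟨y, by simp [sameN, hxy.symm, hx, hy]⟩
  have h2 : 0 < #(sameN G v y) := card_pos.2 ⟨x, by simp [sameN, hxy, hx, hy]⟩
  omega

theorem layer_zero (hconn : G.Connected) (v : V) : #(layer G v 0) = 1 := by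
  rw [card_eq_one]
  refine ⟨v, ?_⟩
  ext u
  simp [layer, hconn.dist_eq_zero_iff, eq_comm]

theorem cycle_dichotomy (hconn : G.Connected) (d : ℕ) (v : V) (c : G.Walk v v)
    (hc : c.IsCycle) (hl : c.length ≤ 2 * d - 2) :
    ∃ m : ℕ, (m + 2 ≤ d ∧ ∃ u a b, a ≠ b ∧ G.dist v u = m + 1 ∧ G.dist v a = m ∧ G.dist v b = m ∧
        G.Adj a u ∧ G.Adj b u) ∨
      (m + 3 ≤ d ∧ ∃ x y, G.Adj x y ∧ G.dist v x = m + 1 ∧ G.dist v y = m + 1) := by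
  have h3 := hc.three_le_length
  have hlo : ∀ i, G.dist v (c.getVert i) ≤ i := fun i => by
    have := SimpleGraph.dist_le (c.take i)
    rw [SimpleGraph.Walk.take_length] at this
    omega
  have hhi : ∀ i, G.dist v (c.getVert i) ≤ c.length - i := fun i => by
    have := SimpleGraph.dist_le (c.drop i)
    rw [SimpleGraph.Walk.drop_length, SimpleGraph.dist_comm] at this
    omega
  obtain ⟨i, hi, hmax⟩ := Finset.exists_max_image (Finset.range (c.length + 1))
    (fun i => G.dist v (c.getVert i)) ⟨0, by simp⟩
  simp only [Finset.mem_range] at hi hmax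
  have h01 := c.adj_getVert_succ (i := 0) (by omega)
  rw [c.getVert_zero] at h01
  have h1 := hmax 1 (by omega)
  rw [SimpleGraph.dist_eq_one_iff_adj.2 h01] at h1
  have hli := hlo i
  have hhii := hhi i
  obtain ⟨j, rfl⟩ : ∃ j, i = j + 1 := ⟨i - 1, by omega⟩
  have hne := hc.getVert_sub_one_ne_getVert_add_one (i := j + 1) (by omega)
  simp only [Nat.add_sub_cancel] at hne
  have ha := c.adj_getVert_succ (i := j) (by omega)
  have hb := c.adj_getVert_succ (i := j + 1) (by omega)
  have ma := hmax j (by omega)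
  have mb := hmax (j + 1 + 1) (by omega)
  have ta := hconn.dist_triangle (u := v) (v := c.getVert j) (w := c.getVert (j + 1))
  have tb := hconn.dist_triangle (u := v) (v := c.getVert (j + 1 + 1)) (w := c.getVert (j + 1))
  rw [SimpleGraph.dist_eq_one_iff_adj.2 ha] at ta
  rw [SimpleGraph.dist_eq_one_iff_adj.2 hb.symm] at tb
  have l1 := hlo j
  have l2 := hhi (j + 1 + 1)
  refine ⟨G.dist v (c.getVert (j + 1)) - 1, ?_⟩
  by_cases ea : G.dist v (c.getVert j) = G.dist v (c.getVert (j + 1))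
  · right
    exact ⟨by omega, _, _, ha, by omega, by omega⟩
  by_cases eb : G.dist v (c.getVert (j + 1 + 1)) = G.dist v (c.getVert (j + 1))
  · right
    exact ⟨by omega, _, _, hb, by omega, by omega⟩
  left
  exact ⟨by omega, _, _, _, hne, by omega, by omega, by omega, ha, hb.symm⟩

theorem numeric (k d : ℕ) (a : ℕ → ℕ) (hle : ∀ i, a i ≤ k * (k - 1) ^ i) (j : ℕ) (hj : j < d)
    (h : a j + k ≤ k * (k - 1) ^ j) :
    ∑ i ∈ range d, a i + k ≤ ∑ i ∈ range d, k * (k - 1) ^ i := by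
  rw [← add_sum_erase _ _ (mem_range.2 hj), ← add_sum_erase _ _ (mem_range.2 hj)]
  have := sum_le_sum (s := (range d).erase j) (fun i _ => hle i)
  omega

end Helpers

theorem stmt_16 (k d : ℕ) (hk : 3 ≤ k) (hd : 3 ≤ d)
    (V : Type*) [Fintype V] (G : SimpleGraph V) [DecidableRel G.Adj]
    (hconn : G.Connected) (hreg : G.IsRegularOfDegree k)
    (hdiam : ∀ u v : V, G.dist u v ≤ d)
    (hg1 : (3 : ℕ∞) ≤ G.egirth) (hg2 : G.egirth ≤ ((2 * d - 2 : ℕ) : ℕ∞)) :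
    (Fintype.card V : ℤ) ≤ (mooreBound k d : ℤ) - k := by
  obtain ⟨v, c, hc, hl⟩ : ∃ (v : V) (c : G.Walk v v), c.IsCycle ∧ c.length ≤ 2 * d - 2 := by
    have hlt : G.egirth < ((2 * d - 2 + 1 : ℕ) : ℕ∞) :=
      lt_of_le_of_lt hg2 (by exact_mod_cast Nat.lt_succ_self _)
    simp only [SimpleGraph.egirth, iInf_lt_iff] at hlt
    obtain ⟨v, c, hc, h⟩ := hlt
    exact ⟨v, c, hc, Nat.lt_succ_iff.1 (by exact_mod_cast h)⟩
  obtain ⟨q, rfl⟩ : ∃ q, k = q + 1 := ⟨k - 1, by omega⟩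
  set a : ℕ → ℕ := fun i => (layer G v (i + 1)).card with ha
  have hM := main_bound G (q + 1) hreg v
  have hB := sum_back G hconn v
  have h0 : a 0 ≤ q + 1 := by
    have := hM 0
    have := hB 0
    rw [layer_zero G hconn v] at *
    simp only [ha]
    omega
  have hstep : ∀ i, a (i + 1) ≤ q * a i := fun i => by
    have := hM (i + 1)
    have := hB (i + 1)
    have := hB i
    simp only [ha]
    rw [add_mul] at *
    omega
  have hle : ∀ i, a i ≤ (q + 1) * (q + 1 - 1) ^ i := by
    intro i
    simp only [Nat.add_sub_cancel]
    induction i with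
    | zero => simpa using h0
    | succ i ih =>
      calc _ ≤ q * a i := hstep i
        _ ≤ q * ((q + 1) * q ^ i) := Nat.mul_le_mul_left _ ih
        _ = _ := by ring
  have key : ∃ j < d, a j + (q + 1) ≤ (q + 1) * (q + 1 - 1) ^ j := by
    simp only [Nat.add_sub_cancel] at hle ⊢
    obtain ⟨m, ⟨hm, u, x, y, hxy, hu, hx, hy, hxu, hyu⟩ | ⟨hm, x, y, hxy, hx, hy⟩⟩ :=
      cycle_dichotomy G hconn d v c hc hl
    · refine ⟨m + 1, by omega, ?_⟩
      have hb2 : 2 ≤ (backN G v u).card := by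
        apply Finset.one_lt_card.2
        exact ⟨x, by simp [backN, hxu, hx, hu], y, by simp [backN, hyu, hy, hu], hxy⟩
      have hs := sum_back' G hconn v m u (by simp [layer, hu]) hb2
      have e1 : a m + 1 ≤ (q + 1) * q ^ m := by
        rcases m with _ | m
        · have := hM 0
          rw [layer_zero G hconn v] at this
          simp only [ha, pow_zero]
          omega
        · have h1 := hM (m + 1)
          have h2 := hB m
          have h3 : a (m + 1) + 1 ≤ q * a m := by
            simp only [ha]
            rw [add_mul] at h1
            omega
          calc _ ≤ q * a m := h3
            _ ≤ q * ((q + 1) * q ^ m) := Nat.mul_le_mul_left _ (hle m)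
            _ = _ := by ring
      have e2 : a (m + 1) + 1 ≤ q * a m := by
        have h1 := hM (m + 1)
        have h2 := hB (m + 1)
        simp only [ha]
        rw [add_mul] at h1
        omega
      calc a (m + 1) + (q + 1) ≤ q * (a m + 1) := by rw [mul_add]; omega
        _ ≤ q * ((q + 1) * q ^ m) := Nat.mul_le_mul_left _ e1
        _ = _ := by ring
    · refine ⟨m + 2, by omega, ?_⟩
      have hs := sum_same G v (m + 1) x y (by simp [layer, hx]) (by simp [layer, hy]) hxy
      have e1 : a (m + 1) + 2 ≤ q * a m := by
        have h1 := hM (m + 1)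
        have h2 := hB (m + 1)
        have h3 := hB m
        simp only [ha]
        rw [add_mul] at h1
        omega
      have e2 : a (m + 2) ≤ q * a (m + 1) := hstep (m + 1)
      calc a (m + 2) + (q + 1) ≤ q * (a (m + 1) + 2) := by rw [mul_add]; omega
        _ ≤ q * (q * a m) := Nat.mul_le_mul_left _ e1
        _ ≤ q * (q * ((q + 1) * q ^ m)) :=
          Nat.mul_le_mul_left _ (Nat.mul_le_mul_left _ (hle m))
        _ = _ := by ring
  obtain ⟨j, hj, hjk⟩ := key
  have hfin := numeric (q + 1) d a hle j hj hjk
  have hcard : Fintype.card V = 1 + ∑ i ∈ Finset.range d, a i := by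
    have := Finset.card_eq_sum_card_fiberwise (f := fun u => G.dist v u)
      (s := (Finset.univ : Finset V)) (t := Finset.range (d + 1))
      (fun u _ => by simpa using Nat.lt_succ_of_le (hdiam v u))
    rw [← Finset.card_univ, this, Finset.sum_range_succ', add_comm]
    congr 1
    exact layer_zero G hconn v
  unfold mooreBound
  omega
end
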